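/- arXiv:2103.07650 — 2 statements merged into one kernel-verified Lean document; each statement's English description precedes it below -/
import Mathlib

section
/- Let n ≥ 2, 1 < q̄ < ∞, and let k be an integer with k ≥ 2q̄′, where q̄′ = q̄/(q̄−1). Let r₀ > 0, T > 1, ε > 0, and let (f, g) ∈ (C_c^∞(ℝⁿ))² with ∫_{ℝⁿ} g(x) dx > 0. Let w be a C² function on [0,T) × ℝⁿ with w(0,·) = εf, ∂_t w(0,·) = εg, supported in {(t,x) : |x| ≤ t + r₀}, and satisfying ∂_t²w − Δw ≥ 0 pointwise. Then there exists a constant δ > 0, depending only on n, k, r₀, q̄ and η (not on R, T, ε, w), such that for all R with 1 ≤ R < T: δ [ε ∫_{ℝⁿ} g(x) dx]^{q̄} R^{n−(n−1)q̄/2} ≤ ∫_0^T ∫_{ℝⁿ} |∂_t w|^{q̄} ψ_R* dx dt. -/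
/-!
Testing `□w ≥ 0` against a nonnegative plane wave `B(t + e·x)`, `‖e‖ = 1`, which solves the wave
equation, shows that the Wronskian `∫ (∂ₜw · B - w · B') dx` is nondecreasing in `t`. If `B = 1` on
the values of `e·x` on the initial support, it starts at `X = ∫ ∂ₜw(0, x) dx = ε ∫ g`, so it stays
at least `X`.

For `R` large compared to `r₀`, let `B` be a bump supported in `[-3r₀, 3r₀]` and average over the
directions `e` and over times comparable to `R`. Inside the cone `‖x‖ ≤ t + r₀`, the condition
`t + e·x ≤ 3r₀` forces `x` into a layer of bounded width along the light cone and `e` into a set of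
measure `O(R^{-(n-1)/2})` around `-x/t`. In the layer, the term with `w` is controlled by `∂ₜw`,
since `w` vanishes a bounded time earlier. Hence `R^{(n+1)/2} X ≤ C ∫_Q |∂ₜw|` where `Q` is the
layer at times in `[R/2, 3R/4]`; for bounded `R` the constant profile `B = 1` gives the same.

As `Q` has volume `O(R^n)`, Jensen's inequality turns this into
`∫_Q |∂ₜw|^q ≥ c X^q R^{n - (n-1)q/2}`, and on `Q` the weight `ψ_R*` is at least `η(3/4)^k > 0`.
-/

open MeasureTheory Real ENNReal FourierTransform
open scoped ContDiff

noncomputable section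

/-- Euclidean space ℝⁿ. -/
abbrev Spc (n : ℕ) := EuclideanSpace ℝ (Fin n)

/-- Space-time ℝ × ℝⁿ. -/
abbrev STn (n : ℕ) := ℝ × Spc n

variable {n : ℕ}

/-- Directional derivative in the space-time direction `v`. -/
def dirD (v : STn n) (f : STn n → ℝ) : STn n → ℝ := fun p => fderiv ℝ f p v

/-- Time derivative ∂_t. -/
def dtD : (STn n → ℝ) → STn n → ℝ := dirD (1, 0)

/-- Spatial derivative ∂_j. -/
def dxD (j : Fin n) : (STn n → ℝ) → STn n → ℝ := dirD (0, EuclideanSpace.single j 1)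

/-- Spatial Laplacian. -/
def lapD (f : STn n → ℝ) : STn n → ℝ := fun p => ∑ j, dxD j (dxD j f) p

/-- d'Alembertian □ = ∂_t² − Δ. -/
def boxD (f : STn n → ℝ) : STn n → ℝ := fun p => dtD (dtD f) p - lapD f p

/-- Lorentz boost L_j = t ∂_j + x_j ∂_t. -/
def LD (j : Fin n) (f : STn n → ℝ) : STn n → ℝ := fun p => p.1 * dxD j f p + p.2 j * dtD f p

/-- Rotation Ω_{jk} = x_j ∂_k − x_k ∂_j. -/
def RotD (j k : Fin n) (f : STn n → ℝ) : STn n → ℝ := fun p => p.2 j * dxD k f p - p.2 k * dxD j f p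

/-- Scaling S = t ∂_t + x·∇. -/
def SD (f : STn n → ℝ) : STn n → ℝ := fun p => p.1 * dtD f p + ∑ j, p.2 j * dxD j f p

/-- Index type for the Klainerman vector fields. -/
def GIdx (n : ℕ) := Option (Fin n) ⊕ Fin n ⊕ (Fin n × Fin n) ⊕ Unit

instance : Fintype (GIdx n) := by unfold GIdx; infer_instance
instance : DecidableEq (GIdx n) := by unfold GIdx; infer_instance

/-- The Klainerman vector field with index `i`. -/
def Gop : GIdx n → (STn n → ℝ) → STn n → ℝ
  | Sum.inl none => dtD
  | Sum.inl (some j) => dxD j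
  | Sum.inr (Sum.inl j) => LD j
  | Sum.inr (Sum.inr (Sum.inl jk)) => RotD jk.1 jk.2
  | Sum.inr (Sum.inr (Sum.inr _)) => SD

/-- Iterated composition Γ^α along a word of indices. -/
def GwL : List (GIdx n) → (STn n → ℝ) → STn n → ℝ
  | [], f => f
  | a :: l, f => Gop a (GwL l f)

/-- Sum of a quantity over all products of at most `N` Klainerman vector fields. -/
def SumW (N : ℕ) (Φ : (STn n → ℝ) → ℝ≥0∞) (f : STn n → ℝ) : ℝ≥0∞ :=
  ∑ m ∈ Finset.range (N + 1), ∑ w : Fin m → GIdx n, Φ (GwL (List.ofFn w) f)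

/-- Pointwise norm of the full space-time gradient ∂u = (∂_t u, ∇_x u). -/
def gradN (f : STn n → ℝ) (p : STn n) : ℝ := Real.sqrt ((dtD f p) ^ 2 + ∑ j, (dxD j f p) ^ 2)

/-- Fourier transform (in space) of a real valued function. -/
def fourierS (g : Spc n → ℝ) : Spc n → ℂ := 𝓕 (fun x => (g x : ℂ))

/-- ‖ |D|^s g ‖_{L²}, i.e. the L² norm of ξ ↦ |ξ|^s (ℱ g)(ξ). -/
def DsN (s : ℝ) (g : Spc n → ℝ) : ℝ≥0∞ :=
  eLpNorm (fun ξ : Spc n => ‖ξ‖ ^ s * ‖fourierS g ξ‖) 2 volume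

/-- The surface measure on the unit sphere of ℝⁿ. -/
def sphM (n : ℕ) : Measure (Metric.sphere (0 : Spc n) 1) := (volume : Measure (Spc n)).toSphere

/-- The L^q norm of g(r ω) over the unit sphere. -/
def sphN (n : ℕ) (q : ℝ) (g : Spc n → ℝ) (r : ℝ) : ℝ≥0∞ :=
  (∫⁻ o, (‖g (r • (o : Spc n))‖₊ : ℝ≥0∞) ^ q ∂(sphM n)) ^ (1 / q)

/-- The mixed norm ‖g‖_{p,q} = (∫_0^∞ ‖g(r·)‖_{L^q(S^{n-1})}^p r^{n-1} dr)^{1/p}. -/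
def mixN (n : ℕ) (p q : ℝ) (g : Spc n → ℝ) : ℝ≥0∞ :=
  (∫⁻ r in Set.Ioi (0 : ℝ), (sphN n q g r) ^ p * ENNReal.ofReal (r ^ (n - 1))) ^ (1 / p)

/-- A space-time function which is Schwartz in the space variable for each fixed time. -/
def SchwartzInX (v : STn n → ℝ) : Prop :=
  ∀ t : ℝ, ∃ φ : SchwartzMap (Spc n) ℝ, ∀ x, v (t, x) = φ x

/-- The space-time partial derivatives ∂_0 = ∂_t, ∂_j (j = 1,2,3) on ℝ × ℝ³. -/
def pd4 (α : Fin 4) : (STn 3 → ℝ) → STn 3 → ℝ := Fin.cases dtD (fun j => dxD j) α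

/-- The null condition for a set of coefficients {A^{αβ}}. -/
def NullCond (A : Fin 4 → Fin 4 → ℝ) : Prop :=
  ∀ X : Fin 4 → ℝ, (X 0) ^ 2 = (X 1) ^ 2 + (X 2) ^ 2 + (X 3) ^ 2 →
    ∑ α, ∑ β, A α β * X α * X β = 0

/-- The null form A^{αβ} (∂_α v)(∂_β w). -/
def QF (A : Fin 4 → Fin 4 → ℝ) (v w : STn 3 → ℝ) (p : STn 3) : ℝ :=
  ∑ α, ∑ β, A α β * pd4 α v p * pd4 β w p

/-- The good derivative T_j = ∂_j + (x_j/|x|) ∂_t. -/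
def TD (j : Fin 3) (f : STn 3 → ℝ) (p : STn 3) : ℝ := dxD j f p + (p.2 j / ‖p.2‖) * dtD f p

end

section Fibers

open Set

variable {α β : Type*} [MeasurableSpace α] [MeasurableSpace β] {μ : Measure α} {ν : Measure β}
  [SFinite μ] [SFinite ν] {S : Set (α × β)} {h : β → ℝ≥0∞} {κ : ℝ≥0∞}

lemma setLIntegral_snd_le_mul (hS : MeasurableSet S) (hh : Measurable h)
    (hκ : ∀ y, μ ((·, y) ⁻¹' S) ≤ κ) :
    ∫⁻ z in S, h z.2 ∂(μ.prod ν) ≤ κ * ∫⁻ y, h y ∂ν := by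
  have hfiber : ∀ y, ∫⁻ x, S.indicator (fun z => h z.2) (x, y) ∂μ = h y * μ ((·, y) ⁻¹' S) :=
    fun y => lintegral_indicator_const (measurable_prodMk_right hS) (h y)
  have hmeas : Measurable (S.indicator fun z => h z.2) := (hh.comp measurable_snd).indicator hS
  calc ∫⁻ z in S, h z.2 ∂(μ.prod ν)
      = ∫⁻ y, ∫⁻ x, S.indicator (fun z => h z.2) (x, y) ∂μ ∂ν := by
        rw [← lintegral_indicator hS, lintegral_prod_symm _ hmeas.aemeasurable]
    _ ≤ ∫⁻ y, κ * h y ∂ν := by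
        refine lintegral_mono fun y => ?_
        simp only [hfiber]
        rw [mul_comm]
        gcongr
        exact hκ y
    _ = κ * ∫⁻ y, h y ∂ν := lintegral_const_mul _ hh

lemma mul_le_mul_lintegral_of_forall_le_setLIntegral (hS : MeasurableSet S) (hh : Measurable h)
    {c : ℝ≥0∞} (hc : ∀ᵐ x ∂μ, c ≤ ∫⁻ y in Prod.mk x ⁻¹' S, h y ∂ν)
    (hκ : ∀ y, μ ((·, y) ⁻¹' S) ≤ κ) :
    μ univ * c ≤ κ * ∫⁻ y, h y ∂ν := by
  have hmeas : Measurable (S.indicator fun z => h z.2) := (hh.comp measurable_snd).indicator hS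
  calc μ univ * c = ∫⁻ _x, c ∂μ := by rw [lintegral_const, mul_comm]
    _ ≤ ∫⁻ x, ∫⁻ y in Prod.mk x ⁻¹' S, h y ∂ν ∂μ := lintegral_mono_ae hc
    _ = ∫⁻ z in S, h z.2 ∂(μ.prod ν) := by
        rw [← lintegral_indicator hS, lintegral_prod _ hmeas.aemeasurable]
        refine lintegral_congr fun x => ?_
        rw [← lintegral_indicator (measurable_prodMk_left hS)]
        rfl
    _ ≤ κ * ∫⁻ y, h y ∂ν := setLIntegral_snd_le_mul hS hh hκ

end Fibers

section Weights

open Set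

variable {α : Type*} [MeasurableSpace α] {μ : Measure α} {f φ : α → ℝ} {c M q : ℝ} {A S : Set α}

lemma integral_rpow_le_mul_integral_rpow [IsFiniteMeasure μ] (hq : 1 ≤ q) (hf : 0 ≤ f)
    (hfi : Integrable f μ) (hfq : Integrable (fun x => f x ^ q) μ) :
    (∫ x, f x ∂μ) ^ q ≤ μ.real univ ^ (q - 1) * ∫ x, f x ^ q ∂μ := by
  rcases eq_zero_or_neZero μ with rfl | hμ
  · simp [Real.zero_rpow (by linarith : q ≠ 0)]
  have hV : 0 < μ.real univ := measureReal_univ_pos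
  have hjensen := (convexOn_rpow hq).map_average_le
    (continuousOn_id.rpow_const fun _ _ => .inr (by linarith)) isClosed_Ici (.of_forall hf) hfi hfq
  simp only [average_eq, smul_eq_mul] at hjensen
  rw [Real.mul_rpow (inv_nonneg.2 hV.le) (integral_nonneg hf), Real.inv_rpow hV.le,
    inv_mul_le_iff₀ (Real.rpow_pos_of_pos hV q), ← mul_assoc] at hjensen
  rwa [Real.rpow_sub_one hV.ne', div_eq_mul_inv]

lemma mul_setIntegral_le_setIntegral_mul (hA : MeasurableSet A)
    (hAS : A ⊆ S) (hf : ∀ x, 0 ≤ f x) (hfi : IntegrableOn f S μ) (hφ : Measurable φ)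
    (hφM : ∀ x, φ x ∈ Icc 0 M) (hcφ : ∀ x ∈ A, c ≤ φ x) :
    c * ∫ x in A, f x ∂μ ≤ ∫ x in S, f x * φ x ∂μ := by
  have hfφ : IntegrableOn (fun x => f x * φ x) S μ :=
    hfi.mul_bdd hφ.aestronglyMeasurable (.of_forall fun x => by
      rw [Real.norm_of_nonneg (hφM x).1]
      exact (hφM x).2)
  calc c * ∫ x in A, f x ∂μ = ∫ x in A, f x * c ∂μ := by rw [integral_mul_const, mul_comm]
    _ ≤ ∫ x in A, f x * φ x ∂μ :=
        setIntegral_mono_on ((hfi.mono_set hAS).mul_const c) (hfφ.mono_set hAS) hA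
          fun x hx => mul_le_mul_of_nonneg_left (hcφ x hx) (hf x)
    _ ≤ ∫ x in S, f x * φ x ∂μ :=
        setIntegral_mono_set hfφ (.of_forall fun x => mul_nonneg (hf x) (hφM x).1) hAS.eventuallyLE

end Weights

section Cone

open Filter Metric Set Topology

variable {n : ℕ} {r t : ℝ} {u φ : STn n → ℝ}

lemma contDiff_dirD {k m : WithTop ℕ∞} (hu : ContDiff ℝ m u) (hkm : k + 1 ≤ m) (v : STn n) :
    ContDiff ℝ k (dirD v u) :=
  (hu.fderiv_right hkm).clm_apply contDiff_const

lemma contDiff_one_dirD (hu : ContDiff ℝ 2 u) (v : STn n) : ContDiff ℝ 1 (dirD v u) :=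
  contDiff_dirD hu one_add_one_eq_two.le v

lemma continuous_dirD (hu : ContDiff ℝ 1 u) (v : STn n) : Continuous (dirD v u) :=
  (contDiff_dirD hu (zero_add 1).le v).continuous

lemma hasDerivAt_time (hu : Differentiable ℝ u) (t : ℝ) (x : Spc n) :
    HasDerivAt (fun s => u (s, x)) (dtD u (t, x)) t := by
  simpa [dtD, dirD, Function.comp_def] using
    ((hu (t, x)).hasFDerivAt.comp t (hasFDerivAt_prodMk_left t x)).hasDerivAt

lemma fderiv_slice (hu : Differentiable ℝ u) (t : ℝ) (x v : Spc n) :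
    fderiv ℝ (fun y => u (t, y)) x v = dirD (0, v) u (t, x) := by
  have h : HasFDerivAt (fun y => u (t, y)) _ x :=
    (hu (t, x)).hasFDerivAt.comp x (hasFDerivAt_prodMk_right t x)
  simp [h.fderiv, dirD]

lemma dirD_mul (hu : Differentiable ℝ u) (hφ : Differentiable ℝ φ) (v z : STn n) :
    dirD v (fun y => u y * φ y) z = dirD v u z * φ z + u z * dirD v φ z := by
  simp [dirD, fderiv_fun_mul (hu z) (hφ z)]
  ring

lemma dirD_sub (hu : Differentiable ℝ u) (hφ : Differentiable ℝ φ) (v z : STn n) :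
    dirD v (fun y => u y - φ y) z = dirD v u z - dirD v φ z := by
  simp [dirD, fderiv_fun_sub (hu z) (hφ z)]

lemma dirD_const_mul (hu : Differentiable ℝ u) (c : ℝ) (v z : STn n) :
    dirD v (fun y => c * u y) z = c * dirD v u z := by
  simp [dirD, fderiv_const_mul (hu z)]

/-- At nonnegative times, `u` vanishes outside the forward light cone with initial slice the ball
of radius `r`. The condition is pointwise, so that no closure of the support enters. -/
def SupportedInCone (r : ℝ) (u : STn n → ℝ) : Prop :=
  ∀ z : STn n, 0 ≤ z.1 → z.1 + r < ‖z.2‖ → u z = 0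

namespace SupportedInCone

lemma mul_right (h : SupportedInCone r u) (φ : STn n → ℝ) :
    SupportedInCone r fun z => u z * φ z :=
  fun z hz hzr => by simp [h z hz hzr]

lemma sub (h : SupportedInCone r u) (hφ : SupportedInCone r φ) :
    SupportedInCone r fun z => u z - φ z :=
  fun z hz hzr => by simp [h z hz hzr, hφ z hz hzr]

protected lemma dirD (h : SupportedInCone r u) (hu : ContDiff ℝ 1 u) (v : STn n) :
    SupportedInCone r (dirD v u) := by
  have hpos : ∀ z : STn n, 0 < z.1 → z.1 + r < ‖z.2‖ → dirD v u z = 0 := by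
    intro z hz hzr
    have hopen : IsOpen ({y : STn n | 0 < y.1} ∩ {y | y.1 + r < ‖y.2‖}) :=
      (isOpen_lt (by fun_prop) (by fun_prop)).inter (isOpen_lt (by fun_prop) (by fun_prop))
    have hev : u =ᶠ[𝓝 z] fun _ => 0 := by
      filter_upwards [hopen.mem_nhds ⟨hz, hzr⟩] with y hy using h y hy.1.le hy.2
    simp [dirD, hev.fderiv_eq]
  rintro ⟨t, x⟩ ht htx
  have hcont : Continuous fun s : ℝ => dirD v u (s, x) :=
    (continuous_dirD hu v).comp (by fun_prop)
  have hright : (fun s : ℝ => dirD v u (s, x)) =ᶠ[𝓝[>] t] fun _ => 0 := by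
    filter_upwards [Ioo_mem_nhdsGT (lt_sub_iff_add_lt.2 htx)] with s hs
    exact hpos (s, x) (ht.trans_lt hs.1) (lt_sub_iff_add_lt.1 hs.2)
  exact tendsto_nhds_unique_of_eventuallyEq (hcont.tendsto t |>.mono_left nhdsWithin_le_nhds)
    tendsto_const_nhds hright

lemma integrable (h : SupportedInCone r u) (hu : Continuous u) (ht : 0 ≤ t) :
    Integrable fun x => u (t, x) := by
  refine (hu.comp (by fun_prop : Continuous fun x : Spc n => (t, x))
    ).integrable_of_hasCompactSupport ?_
  refine .intro (isCompact_closedBall (0 : Spc n) (t + r)) fun x hx => h (t, x) ht ?_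
  simpa using hx

lemma continuousOn_integral (h : SupportedInCone r u) (hu : Continuous u) (b : ℝ) :
    ContinuousOn (fun s => ∫ x, u (s, x)) (Icc 0 b) := by
  refine continuousOn_integral_of_compact_support (isCompact_closedBall (0 : Spc n) (b + r))
    (f := fun s x => u (s, x)) hu.continuousOn fun s x hs hx => h (s, x) hs.1 ?_
  rw [mem_closedBall_zero_iff, not_le] at hx
  linarith [hs.2]

lemma hasDerivAt_integral (h : SupportedInCone r u) (hu : ContDiff ℝ 1 u) (ht : 0 < t) :
    HasDerivAt (fun s => ∫ x, u (s, x)) (∫ x, dtD u (t, x)) t := by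
  have hcont : Continuous (dtD u) := continuous_dirD hu _
  have hball : IsCompact (closedBall (0 : Spc n) (t + 1 + r)) := isCompact_closedBall _ _
  obtain ⟨M, hM⟩ := ((isCompact_Icc (a := 0) (b := t + 1)).prod hball).exists_bound_of_continuousOn
    hcont.continuousOn
  refine (hasDerivAt_integral_of_dominated_loc_of_deriv_le (F := fun s x => u (s, x))
    (F' := fun s x => dtD u (s, x)) (s := Icc 0 (t + 1))
    (bound := (closedBall (0 : Spc n) (t + 1 + r)).indicator fun _ => M)
    (Icc_mem_nhds ht (lt_add_one t)) (.of_forall fun s => ?_) (h.integrable hu.continuous ht.le)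
    ?_ (.of_forall fun x s hs => ?_) ?_
    (.of_forall fun x s _ => hasDerivAt_time (hu.differentiable one_ne_zero) s x)).2
  · exact (hu.continuous.comp (by fun_prop)).aestronglyMeasurable
  · exact (hcont.comp (by fun_prop)).aestronglyMeasurable
  · by_cases hx : x ∈ closedBall (0 : Spc n) (t + 1 + r)
    · rw [indicator_of_mem hx]
      exact hM (s, x) ⟨hs, hx⟩
    · rw [mem_closedBall_zero_iff, not_le] at hx
      have hz : dtD u (s, x) = 0 := h.dirD hu _ (s, x) hs.1 (by linarith [hs.2])
      rw [hz, norm_zero, indicator_of_notMem (by simpa using hx)]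
  · exact (integrable_indicator_iff measurableSet_closedBall).2
      (integrableOn_const hball.measure_lt_top.ne)

lemma integrableOn_slab (h : SupportedInCone r u) (hu : Continuous u) (T : ℝ) :
    IntegrableOn u (Ioo 0 T ×ˢ univ) := by
  have hcompact : IsCompact (Icc 0 T ×ˢ closedBall (0 : Spc n) (T + r)) :=
    isCompact_Icc.prod (isCompact_closedBall _ _)
  refine (hu.continuousOn.integrableOn_compact hcompact).of_forall_sdiff_eq_zero
    (measurableSet_Ioo.prod .univ) ?_
  rintro ⟨s, x⟩ ⟨⟨⟨hs0, hsT⟩, -⟩, hx⟩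
  refine h (s, x) hs0.le (lt_of_not_ge fun hle => hx ⟨⟨hs0.le, hsT.le⟩, ?_⟩)
  rw [mem_closedBall_zero_iff]
  exact hle.trans (by gcongr)

end SupportedInCone

end Cone

section Green

open Filter Set Topology

variable {n : ℕ} {r t T : ℝ} {u w φ : STn n → ℝ}

lemma continuous_lapD (hw : ContDiff ℝ 2 w) : Continuous (lapD w) :=
  continuous_finsetSum _ fun _ _ => continuous_dirD (contDiff_one_dirD hw _) _

protected lemma SupportedInCone.lapD (h : SupportedInCone r w) (hw : ContDiff ℝ 2 w) :
    SupportedInCone r (lapD w) := fun z hz hzr =>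
  Finset.sum_eq_zero fun _ _ =>
    ((h.dirD (hw.of_le one_le_two) _).dirD (contDiff_one_dirD hw _) _) z hz hzr

lemma integral_dirD_mul (h : SupportedInCone r u) (hu : ContDiff ℝ 1 u) (hφ : ContDiff ℝ 1 φ)
    (ht : 0 ≤ t) (v : Spc n) :
    ∫ x, dirD (0, v) u (t, x) * φ (t, x) = -∫ x, u (t, x) * dirD (0, v) φ (t, x) := by
  have hdu := hu.differentiable one_ne_zero
  have hdφ := hφ.differentiable one_ne_zero
  have hslice : Differentiable ℝ fun x : Spc n => (t, x) := by fun_prop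
  have hparts := integral_mul_fderiv_eq_neg_fderiv_mul_of_integrable (μ := volume) (v := v)
    (f := fun x => u (t, x)) (g := fun x => φ (t, x))
  simp only [fderiv_slice hdu, fderiv_slice hdφ] at hparts
  rw [hparts, neg_neg]
  · exact ((h.dirD hu _).mul_right φ).integrable ((continuous_dirD hu _).mul hφ.continuous) ht
  · exact (h.mul_right _).integrable (hu.continuous.mul (continuous_dirD hφ _)) ht
  · exact (h.mul_right φ).integrable (hu.continuous.mul hφ.continuous) ht
  · exact fun x _ => (hdu.comp hslice) x
  · exact fun x _ => (hdφ.comp hslice) x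

lemma integral_lapD_mul (h : SupportedInCone r w) (hw : ContDiff ℝ 2 w) (hφ : ContDiff ℝ 2 φ)
    (ht : 0 ≤ t) : ∫ x, lapD w (t, x) * φ (t, x) = ∫ x, w (t, x) * lapD φ (t, x) := by
  have hw1 := hw.of_le one_le_two
  have hφ1 := hφ.of_le one_le_two
  simp only [lapD, Finset.sum_mul, Finset.mul_sum]
  rw [integral_finsetSum, integral_finsetSum]
  · refine Finset.sum_congr rfl fun j _ => ?_
    rw [dxD, integral_dirD_mul (h.dirD hw1 _) (contDiff_one_dirD hw _) hφ1 ht,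
      integral_dirD_mul h hw1 (contDiff_one_dirD hφ _) ht, neg_neg]
  · exact fun j _ => (h.mul_right _).integrable
      (hw.continuous.mul (continuous_dirD (contDiff_one_dirD hφ _) _)) ht
  · exact fun j _ => (((h.dirD hw1 _).dirD (contDiff_one_dirD hw _) _).mul_right φ).integrable
      ((continuous_dirD (contDiff_one_dirD hw _) _).mul hφ.continuous) ht

/-- The time component of the current `w ↦ ∂w · φ - w · ∂φ` in Green's identity for `□`. -/
noncomputable def wronskianDensity (w φ : STn n → ℝ) : STn n → ℝ :=
  fun z => dtD w z * φ z - w z * dtD φ z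

/-- The boundary term at time `t` in Green's identity for `□`, which is constant in time when `w`
and `φ` solve the wave equation. -/
noncomputable def wronskian (w φ : STn n → ℝ) (t : ℝ) : ℝ := ∫ x, wronskianDensity w φ (t, x)

lemma contDiff_wronskianDensity (hw : ContDiff ℝ 2 w) (hφ : ContDiff ℝ 2 φ) :
    ContDiff ℝ 1 (wronskianDensity w φ) :=
  ((contDiff_one_dirD hw _).mul (hφ.of_le one_le_two)).sub
    ((hw.of_le one_le_two).mul (contDiff_one_dirD hφ _))

protected lemma SupportedInCone.wronskianDensity (h : SupportedInCone r w) (hw : ContDiff ℝ 2 w)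
    (φ : STn n → ℝ) : SupportedInCone r (wronskianDensity w φ) :=
  ((h.dirD (hw.of_le one_le_two) _).mul_right φ).sub (h.mul_right _)

lemma dtD_wronskianDensity (hw : ContDiff ℝ 2 w) (hφ : ContDiff ℝ 2 φ) (z : STn n) :
    dtD (wronskianDensity w φ) z =
      boxD w z * φ z - w z * boxD φ z + (lapD w z * φ z - w z * lapD φ z) := by
  have hdw := hw.differentiable two_ne_zero
  have hdφ := hφ.differentiable two_ne_zero
  have hdw' := (contDiff_one_dirD hw (1, 0)).differentiable one_ne_zero
  have hdφ' := (contDiff_one_dirD hφ (1, 0)).differentiable one_ne_zero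
  unfold wronskianDensity dtD
  rw [dirD_sub (hdw'.fun_mul hdφ) (hdw.fun_mul hdφ'), dirD_mul hdw' hdφ, dirD_mul hdw hdφ']
  simp only [boxD, dtD]
  ring

lemma hasDerivAt_wronskian (h : SupportedInCone r w) (hw : ContDiff ℝ 2 w) (hφ : ContDiff ℝ 2 φ)
    (ht : 0 < t) : HasDerivAt (wronskian w φ)
      (∫ x, (boxD w (t, x) * φ (t, x) - w (t, x) * boxD φ (t, x))) t := by
  have hF := contDiff_wronskianDensity hw hφ
  have hFsupp := h.wronskianDensity hw φ
  have hint : Integrable fun x => dtD (wronskianDensity w φ) (t, x) :=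
    (hFsupp.dirD hF _).integrable (continuous_dirD hF _) ht.le
  have hlapw : Integrable fun x => lapD w (t, x) * φ (t, x) :=
    ((h.lapD hw).mul_right φ).integrable ((continuous_lapD hw).mul hφ.continuous) ht.le
  have hlapφ : Integrable fun x => w (t, x) * lapD φ (t, x) :=
    (h.mul_right _).integrable (hw.continuous.mul (continuous_lapD hφ)) ht.le
  have hlap : Integrable fun x => lapD w (t, x) * φ (t, x) - w (t, x) * lapD φ (t, x) :=
    hlapw.sub hlapφ
  have hlap0 : ∫ x, (lapD w (t, x) * φ (t, x) - w (t, x) * lapD φ (t, x)) = 0 := by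
    rw [integral_sub hlapw hlapφ, integral_lapD_mul h hw hφ ht.le, sub_self]
  refine (hFsupp.hasDerivAt_integral hF ht).congr_deriv ?_
  rw [← sub_zero (∫ x, dtD _ (t, x)), ← hlap0, ← integral_sub hint hlap]
  simp only [dtD_wronskianDensity hw hφ, add_sub_cancel_right]

/-- A supersolution of the wave equation on `0 < t < T` which is supported in the forward cone of
radius `r`: the common setting of the `L¹` estimates. -/
structure IsConeSupersolution (r T : ℝ) (w : STn n → ℝ) : Prop where
  contDiff : ContDiff ℝ 2 w
  supported : SupportedInCone r w
  boxD_nonneg : ∀ z : STn n, 0 < z.1 → z.1 < T → 0 ≤ boxD w z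

namespace IsConeSupersolution

lemma continuous_dtD (h : IsConeSupersolution r T w) : Continuous (dtD w) :=
  continuous_dirD (h.contDiff.of_le one_le_two) _

lemma supported_dtD (h : IsConeSupersolution r T w) : SupportedInCone r (dtD w) :=
  h.supported.dirD (h.contDiff.of_le one_le_two) _

lemma monotoneOn_wronskian (h : IsConeSupersolution r T w) (hφ : ContDiff ℝ 2 φ)
    (hφ0 : ∀ z, 0 ≤ φ z) (hφbox : ∀ z, boxD φ z = 0) :
    MonotoneOn (wronskian w φ) (Ico 0 T) := by
  have hderiv : ∀ s ∈ interior (Ico 0 T),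
      HasDerivAt (wronskian w φ) (∫ x, boxD w (s, x) * φ (s, x)) s := by
    intro s hs
    rw [interior_Ico] at hs
    simpa [hφbox] using hasDerivAt_wronskian h.supported h.contDiff hφ hs.1
  have hcont : ContinuousOn (wronskian w φ) (Icc 0 T) :=
    (h.supported.wronskianDensity h.contDiff φ).continuousOn_integral
      (contDiff_wronskianDensity h.contDiff hφ).continuous T
  refine monotoneOn_of_deriv_nonneg (convex_Ico 0 T) (hcont.mono Ico_subset_Icc_self)
    (fun s hs => (hderiv s hs).differentiableAt.differentiableWithinAt) fun s hs => ?_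
  rw [(hderiv s hs).deriv]
  rw [interior_Ico] at hs
  exact integral_nonneg fun x => mul_nonneg (h.boxD_nonneg (s, x) hs.1 hs.2) (hφ0 _)

end IsConeSupersolution

end Green

section PlaneWave

open Filter Set Topology

variable {n : ℕ} {r t T M : ℝ} {w : STn n → ℝ} {B : ℝ → ℝ} {e : Spc n}

/-- The wave with profile `B` travelling in the direction `-e`. -/
noncomputable def planeWave (B : ℝ → ℝ) (e : Spc n) : STn n → ℝ := fun z => B (z.1 + inner ℝ e z.2)

lemma contDiff_planeWave {k : WithTop ℕ∞} (hB : ContDiff ℝ k B) (e : Spc n) :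
    ContDiff ℝ k (planeWave B e) :=
  hB.comp (contDiff_fst.add (contDiff_const.inner ℝ contDiff_snd))

lemma dirD_planeWave (hB : Differentiable ℝ B) (e : Spc n) (v : STn n) :
    dirD v (planeWave B e) = fun z => (v.1 + inner ℝ e v.2) * planeWave (deriv B) e z := by
  ext z
  have hphase : HasFDerivAt (fun z : STn n => z.1 + inner ℝ e z.2)
      (ContinuousLinearMap.fst ℝ ℝ (Spc n) + innerSL ℝ e ∘L ContinuousLinearMap.snd ℝ ℝ (Spc n))
      z :=
    hasFDerivAt_fst.add ((innerSL ℝ e).hasFDerivAt.comp z hasFDerivAt_snd)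
  have hwave : HasFDerivAt (planeWave B e) _ z :=
    (hB (z.1 + inner ℝ e z.2)).hasDerivAt.comp_hasFDerivAt z hphase
  rw [dirD, hwave.fderiv]
  simp [planeWave, add_mul, mul_comm]

lemma dirD_dirD_planeWave (hB : ContDiff ℝ 2 B) (e : Spc n) (v z : STn n) :
    dirD v (dirD v (planeWave B e)) z =
      (v.1 + inner ℝ e v.2) ^ 2 * planeWave (deriv (deriv B)) e z := by
  have hB' : ContDiff ℝ 1 (deriv B) := ContDiff.deriv' (by rwa [one_add_one_eq_two])
  rw [dirD_planeWave (hB.differentiable two_ne_zero),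
    dirD_const_mul ((contDiff_planeWave hB' e).differentiable one_ne_zero),
    dirD_planeWave (hB'.differentiable one_ne_zero)]
  ring

lemma boxD_planeWave (hB : ContDiff ℝ 2 B) (he : ‖e‖ = 1) (z : STn n) :
    boxD (planeWave B e) z = 0 := by
  have hsum : ∑ j, e j ^ 2 = 1 := by rw [← EuclideanSpace.real_norm_sq_eq, he, one_pow]
  simp [boxD, lapD, dtD, dxD, dirD_dirD_planeWave hB, EuclideanSpace.inner_single_right,
    ← Finset.sum_mul, hsum]

/-- The profile of a test plane wave: a `C²` cutoff equal to `1` near `[-r, r]`, which is the range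
of `e·x` on the initial support, with `|B'| ≤ M`. -/
structure IsCutoffProfile (r M : ℝ) (B : ℝ → ℝ) : Prop where
  contDiff : ContDiff ℝ 2 B
  nonneg : ∀ s, 0 ≤ B s
  le_one : ∀ s, B s ≤ 1
  abs_deriv_le : ∀ s, |deriv B s| ≤ M
  eventuallyEq_one : ∀ s, |s| ≤ r → B =ᶠ[𝓝 s] 1

lemma dtD_planeWave (hB : Differentiable ℝ B) (e : Spc n) :
    dtD (planeWave B e) = planeWave (deriv B) e := by
  simp [dtD, dirD_planeWave hB]

lemma wronskian_planeWave_zero (h : IsConeSupersolution r T w) (hB : IsCutoffProfile r M B)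
    (he : ‖e‖ = 1) : wronskian w (planeWave B e) 0 = ∫ x, dtD w (0, x) := by
  refine integral_congr_ae (.of_forall fun x => ?_)
  simp only [wronskianDensity, dtD_planeWave (hB.contDiff.differentiable two_ne_zero), planeWave,
    zero_add]
  rcases le_or_gt ‖x‖ r with hx | hx
  · have hphase : |inner ℝ e x| ≤ r :=
      (abs_real_inner_le_norm e x).trans (by rwa [he, one_mul])
    have hone := hB.eventuallyEq_one _ hphase
    simp [hone.deriv_eq, hone.eq_of_nhds, Pi.one_def]
  · have hx' : (0 : ℝ) + r < ‖x‖ := by rwa [zero_add]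
    simp [h.supported (0, x) le_rfl hx', h.supported_dtD (0, x) le_rfl hx']

lemma integral_dtD_zero_le_wronskian (h : IsConeSupersolution r T w) (hB : IsCutoffProfile r M B)
    (he : ‖e‖ = 1) (ht : t ∈ Ico 0 T) :
    ∫ x, dtD w (0, x) ≤ wronskian w (planeWave B e) t := by
  rw [← wronskian_planeWave_zero h hB he]
  exact h.monotoneOn_wronskian (contDiff_planeWave hB.contDiff e) (fun z => hB.nonneg _)
    (boxD_planeWave hB.contDiff he) ⟨le_rfl, ht.1.trans_lt ht.2⟩ ht ht.1

/-- The points of the forward cone at times in `[a, b]` at which the phase of a plane wave in the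
direction `-e` lies in `S`. -/
def waveStrip (r a b : ℝ) (S : Set ℝ) (e : Spc n) : Set (STn n) :=
  {z | z.1 ∈ Icc a b ∧ ‖z.2‖ ≤ z.1 + r ∧ z.1 + inner ℝ e z.2 ∈ S}

/-- The pointwise bound for the Wronskian density of `w` with a plane wave whose profile is bounded
by `1` and has derivative bounded by `M`. -/
noncomputable def jetEnorm (M : ℝ) (w : STn n → ℝ) (z : STn n) : ℝ≥0∞ :=
  ‖dtD w z‖ₑ + .ofReal M * ‖w z‖ₑ

lemma IsConeSupersolution.measurable_jetEnorm (h : IsConeSupersolution r T w) (M : ℝ) :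
    Measurable (jetEnorm M w) :=
  h.continuous_dtD.enorm.measurable.add (h.contDiff.continuous.enorm.measurable.const_mul _)

lemma enorm_wronskianDensity_planeWave_le (hB : IsCutoffProfile r M B) (w : STn n → ℝ)
    (e : Spc n) (z : STn n) : ‖wronskianDensity w (planeWave B e) z‖ₑ ≤ jetEnorm M w z := by
  rw [wronskianDensity, dtD_planeWave (hB.contDiff.differentiable two_ne_zero)]
  refine enorm_sub_le.trans (add_le_add ?_ ?_)
  · have hle : ‖planeWave B e z‖ₑ ≤ 1 := by
      rw [← ofReal_norm, ENNReal.ofReal_le_one, planeWave, norm_of_nonneg (hB.nonneg _)]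
      exact hB.le_one _
    rw [enorm_mul]
    exact mul_le_of_le_one_right' hle
  · rw [enorm_mul, mul_comm, ← ofReal_norm (planeWave _ e z)]
    gcongr
    exact hB.abs_deriv_le _

lemma wronskianDensity_planeWave_eq_zero (h : IsConeSupersolution r T w) (hB : Differentiable ℝ B)
    {a b : ℝ} (ha : 0 ≤ a) {x : Spc n} (ht : t ∈ Icc a b)
    (hx : (t, x) ∉ waveStrip r a b (tsupport B) e) :
    wronskianDensity w (planeWave B e) (t, x) = 0 := by
  rw [wronskianDensity, dtD_planeWave hB]
  rcases le_or_gt ‖x‖ (t + r) with hcone | hcone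
  · have hphase : t + inner ℝ e x ∉ tsupport B := fun hmem => hx ⟨ht, hcone, hmem⟩
    simp [planeWave, image_eq_zero_of_notMem_tsupport hphase, deriv_of_notMem_tsupport hphase]
  · have ht0 : 0 ≤ t := ha.trans ht.1
    simp [h.supported (t, x) ht0 hcone, h.supported_dtD (t, x) ht0 hcone]

lemma isClosed_setOf_mem_waveStrip {S : Set ℝ} (hS : IsClosed S) (r a b : ℝ) :
    IsClosed {p : Spc n × STn n | p.2 ∈ waveStrip r a b S p.1} := by
  have hcone : IsClosed {p : Spc n × STn n | ‖p.2.2‖ ≤ p.2.1 + r} :=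
    isClosed_le (by fun_prop) (by fun_prop)
  have hphase : Continuous fun p : Spc n × STn n => p.2.1 + inner ℝ p.1 p.2.2 :=
    (continuous_fst.comp continuous_snd).add
      (continuous_fst.inner (continuous_snd.comp continuous_snd))
  exact (isClosed_Icc.preimage (continuous_fst.comp continuous_snd)).inter
    (hcone.inter (hS.preimage hphase))

lemma isClosed_waveStrip {S : Set ℝ} (hS : IsClosed S) (r a b : ℝ) (e : Spc n) :
    IsClosed (waveStrip r a b S e) :=
  (isClosed_setOf_mem_waveStrip hS r a b).preimage (Continuous.prodMk_right e)

lemma ofReal_mul_le_lintegral_waveStrip (h : IsConeSupersolution r T w)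
    (hB : IsCutoffProfile r M B) (he : ‖e‖ = 1) {a b : ℝ} (ha : 0 ≤ a) (hb : b < T) :
    .ofReal (b - a) * .ofReal (∫ x, dtD w (0, x)) ≤
      ∫⁻ z in waveStrip r a b (tsupport B) e, jetEnorm M w z := by
  have hmeas : MeasurableSet (waveStrip r a b (tsupport B) e) :=
    (isClosed_waveStrip (isClosed_tsupport B) r a b e).measurableSet
  have hslice : ∀ t ∈ Icc a b, .ofReal (∫ x, dtD w (0, x)) ≤
      ∫⁻ x, (waveStrip r a b (tsupport B) e).indicator (jetEnorm M w) (t, x) := by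
    intro t ht
    calc .ofReal (∫ x, dtD w (0, x)) ≤ .ofReal ‖wronskian w (planeWave B e) t‖ :=
          ENNReal.ofReal_le_ofReal <| (integral_dtD_zero_le_wronskian h hB he
            ⟨ha.trans ht.1, ht.2.trans_lt hb⟩).trans (le_abs_self _)
      _ ≤ ∫⁻ x, ‖wronskianDensity w (planeWave B e) (t, x)‖ₑ := by
          rw [ofReal_norm]
          exact enorm_integral_le_lintegral_enorm _
      _ ≤ _ := by
          refine lintegral_mono fun x => ?_
          by_cases hx : (t, x) ∈ waveStrip r a b (tsupport B) e
          · rw [indicator_of_mem hx]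
            exact enorm_wronskianDensity_planeWave_le hB w e (t, x)
          · rw [wronskianDensity_planeWave_eq_zero h (hB.contDiff.differentiable two_ne_zero) ha
              ht hx, enorm_zero]
            exact zero_le
  calc .ofReal (b - a) * .ofReal (∫ x, dtD w (0, x))
      = ∫⁻ _t in Icc a b, .ofReal (∫ x, dtD w (0, x)) := by
        rw [setLIntegral_const, Real.volume_Icc, mul_comm]
    _ ≤ ∫⁻ t in Icc a b, ∫⁻ x,
          (waveStrip r a b (tsupport B) e).indicator (jetEnorm M w) (t, x) :=
        setLIntegral_mono' measurableSet_Icc hslice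
    _ ≤ ∫⁻ t, ∫⁻ x, (waveStrip r a b (tsupport B) e).indicator (jetEnorm M w) (t, x) :=
        setLIntegral_le_lintegral _ _
    _ = _ := by
        rw [← lintegral_prod _ ((h.measurable_jetEnorm M).indicator hmeas).aemeasurable,
          ← Measure.volume_eq_prod, lintegral_indicator hmeas]

end PlaneWave

section ConeLayer

open Metric Set

variable {n m : ℕ} {r ℓ ℓ' a a' b T t : ℝ} {w : STn n → ℝ} {e x : Spc n}

/-- The part of the forward cone of radius `r` which lies within distance `ℓ` of the light cone, at
times in `[a, b]`. -/
def coneLayer (n : ℕ) (r ℓ a b : ℝ) : Set (STn n) :=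
  {z | z.1 ∈ Icc a b ∧ z.1 - ℓ ≤ ‖z.2‖ ∧ ‖z.2‖ ≤ z.1 + r}

lemma isCompact_coneLayer (n : ℕ) (r ℓ a b : ℝ) : IsCompact (coneLayer n r ℓ a b) := by
  have hinner : IsClosed {z : STn n | z.1 - ℓ ≤ ‖z.2‖} := isClosed_le (by fun_prop) (by fun_prop)
  have houter : IsClosed {z : STn n | ‖z.2‖ ≤ z.1 + r} := isClosed_le (by fun_prop) (by fun_prop)
  have hbox : IsCompact (Icc a b ×ˢ closedBall (0 : Spc n) (b + r)) :=
    isCompact_Icc.prod (isCompact_closedBall _ _)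
  refine hbox.of_isClosed_subset
    ((isClosed_Icc.preimage continuous_fst).inter (hinner.inter houter)) ?_
  rintro ⟨t, x⟩ ⟨ht, -, hx⟩
  exact ⟨ht, mem_closedBall_zero_iff.2 (hx.trans (by gcongr; exact ht.2))⟩

lemma measurableSet_coneLayer (n : ℕ) (r ℓ a b : ℝ) : MeasurableSet (coneLayer n r ℓ a b) :=
  (isCompact_coneLayer n r ℓ a b).measurableSet

lemma coneLayer_subset_coneLayer (hℓ : ℓ ≤ ℓ') : coneLayer n r ℓ a b ⊆ coneLayer n r ℓ' a b :=
  fun _ hz => ⟨hz.1, (sub_le_sub_left hℓ _).trans hz.2.1, hz.2.2⟩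

lemma waveStrip_subset_coneLayer {S : Set ℝ} (hS : S ⊆ Iic ℓ) (he : ‖e‖ = 1) :
    waveStrip r a b S e ⊆ coneLayer n r ℓ a b := by
  rintro ⟨t, x⟩ ⟨ht, hx, hphase⟩
  have hinner := neg_le_of_abs_le (abs_real_inner_le_norm e x)
  have hle : t + inner ℝ e x ≤ ℓ := hS hphase
  refine ⟨ht, ?_, hx⟩
  rw [he, one_mul] at hinner
  dsimp only
  linarith

lemma waveStrip_subset_coneLayer_of_le (hb : b ≤ ℓ) (S : Set ℝ) (e : Spc n) :
    waveStrip r a b S e ⊆ coneLayer n r ℓ a b :=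
  fun z hz => ⟨hz.1, by linarith [hz.1.2, norm_nonneg z.2], hz.2.1⟩

lemma volume_annulus_le (hr : 0 ≤ ℓ + r) (htr : 0 ≤ t + r) :
    volume {x : Spc (m + 1) | t - ℓ ≤ ‖x‖ ∧ ‖x‖ ≤ t + r} ≤
      .ofReal ((ℓ + r) * (m + 1) * (t + r) ^ m) * volume (ball (0 : Spc (m + 1)) 1) := by
  set ρ := max (t - ℓ) 0 with hρ
  have hρ0 : 0 ≤ ρ := le_max_right _ _
  have hρt : ρ ≤ t + r := max_le (by linarith) htr
  have hwidth : t + r - ρ ≤ ℓ + r := by linarith [le_max_left (t - ℓ) 0]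
  have hpow : (t + r) ^ (m + 1) - ρ ^ (m + 1) ≤ (ℓ + r) * (m + 1) * (t + r) ^ m := by
    have h := (le_abs_self _).trans (abs_pow_sub_pow_le (t + r) ρ (m + 1))
    rw [abs_of_nonneg htr, abs_of_nonneg hρ0, max_eq_left hρt, abs_of_nonneg (sub_nonneg.2 hρt),
      Nat.add_sub_cancel, Nat.cast_succ] at h
    exact h.trans (by gcongr)
  have hsub : {x : Spc (m + 1) | t - ℓ ≤ ‖x‖ ∧ ‖x‖ ≤ t + r} ⊆ closedBall 0 (t + r) \ ball 0 ρ :=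
    fun x hx => ⟨by simpa using hx.2, by simpa [hρ] using hx.1⟩
  refine (measure_mono hsub).trans ?_
  rw [measure_sdiff (ball_subset_closedBall.trans (closedBall_subset_closedBall hρt))
    measurableSet_ball.nullMeasurableSet measure_ball_lt_top.ne,
    Measure.addHaar_closedBall _ _ htr, Measure.addHaar_ball _ _ hρ0,
    ← ENNReal.sub_mul (fun _ _ => measure_ball_lt_top.ne), ← ENNReal.ofReal_sub _ (by positivity),
    finrank_euclideanSpace_fin]
  gcongr

lemma volume_coneLayer_le (hr : 0 ≤ ℓ + r) (har : 0 ≤ a + r) :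
    volume (coneLayer (m + 1) r ℓ a b) ≤
      .ofReal ((ℓ + r) * (m + 1) * (b + r) ^ m) * volume (ball (0 : Spc (m + 1)) 1) *
        .ofReal (b - a) := by
  let κ := ENNReal.ofReal ((ℓ + r) * (m + 1) * (b + r) ^ m) * volume (ball (0 : Spc (m + 1)) 1)
  have hslice : ∀ t, volume (Prod.mk t ⁻¹' coneLayer (m + 1) r ℓ a b) ≤
      (Icc a b).indicator (fun _ => κ) t := by
    intro t
    by_cases ht : t ∈ Icc a b
    · have htr : 0 ≤ t + r := har.trans (by gcongr; exact ht.1)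
      rw [indicator_of_mem ht]
      have htb : t + r ≤ b + r := by gcongr; exact ht.2
      refine (measure_mono fun x hx => hx.2).trans ((volume_annulus_le hr htr).trans ?_)
      dsimp only [κ]
      gcongr
    · have hempty : Prod.mk t ⁻¹' coneLayer (m + 1) r ℓ a b = ∅ :=
        eq_empty_of_forall_notMem fun x hx => ht hx.1
      rw [hempty, measure_empty]
      exact zero_le
  rw [Measure.volume_eq_prod, Measure.prod_apply (measurableSet_coneLayer _ _ _ _ _)]
  refine (lintegral_mono hslice).trans_eq ?_
  rw [lintegral_indicator_const measurableSet_Icc, Real.volume_Icc]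

lemma enorm_le_lintegral_enorm_dtD (hw : ContDiff ℝ 1 w) (hat : a ≤ t) (hax : w (a, x) = 0) :
    ‖w (t, x)‖ₑ ≤ ∫⁻ s in Ioc a t, ‖dtD w (s, x)‖ₑ := by
  have hcont : Continuous fun s : ℝ => dtD w (s, x) := (continuous_dirD hw _).comp (by fun_prop)
  have hftc := intervalIntegral.integral_eq_sub_of_hasDerivAt
    (fun s _ => hasDerivAt_time (hw.differentiable one_ne_zero) s x)
    (hcont.intervalIntegrable a t)
  rw [hax, sub_zero, intervalIntegral.integral_of_le hat] at hftc
  rw [← hftc]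
  exact enorm_integral_le_lintegral_enorm _

lemma enorm_le_lintegral_indicator_coneLayer (h : IsConeSupersolution r T w) (ha' : 0 ≤ a')
    (haa' : a' + ℓ + r < a) (hr : 0 ≤ ℓ + r) (htx : (t, x) ∈ coneLayer n r ℓ a b) :
    ‖w (t, x)‖ₑ ≤ ∫⁻ s, (coneLayer n r ℓ a' b).indicator (fun z => ‖dtD w z‖ₑ) (s, x) := by
  obtain ⟨ht, hinner, -⟩ := htx
  dsimp only at ht hinner
  have hstart : w (a', x) = 0 := h.supported (a', x) ha' (by dsimp only; linarith [ht.1])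
  refine (enorm_le_lintegral_enorm_dtD (h.contDiff.of_le one_le_two) (by linarith [ht.1])
    hstart).trans <| (setLIntegral_mono' measurableSet_Ioc fun s hs => ?_).trans
      (setLIntegral_le_lintegral _ _)
  by_cases hcone : ‖x‖ ≤ s + r
  · have hmem : (s, x) ∈ coneLayer n r ℓ a' b :=
      ⟨⟨hs.1.le, hs.2.trans ht.2⟩, (sub_le_sub_right hs.2 ℓ).trans hinner, hcone⟩
    rw [indicator_of_mem hmem]
  · rw [h.supported_dtD (s, x) (ha'.trans hs.1.le) (not_le.1 hcone), enorm_zero]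
    exact zero_le

lemma lintegral_enorm_coneLayer_le (h : IsConeSupersolution r T w) (ha' : 0 ≤ a')
    (haa' : a' + ℓ + r < a) (hr : 0 ≤ ℓ + r) :
    ∫⁻ z in coneLayer n r ℓ a b, ‖w z‖ₑ ≤
      .ofReal (ℓ + r) * ∫⁻ z in coneLayer n r ℓ a' b, ‖dtD w z‖ₑ := by
  set q := (coneLayer n r ℓ a' b).indicator fun z => ‖dtD w z‖ₑ
  have hq : Measurable q :=
    h.continuous_dtD.enorm.measurable.indicator (measurableSet_coneLayer _ _ _ _ _)
  have hfiber : ∀ x, volume ((·, x) ⁻¹' coneLayer n r ℓ a b) ≤ .ofReal (ℓ + r) := by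
    intro x
    calc volume ((·, x) ⁻¹' coneLayer n r ℓ a b) ≤ volume (Icc (‖x‖ - r) (‖x‖ + ℓ)) :=
          measure_mono fun t ht => ⟨sub_le_iff_le_add.2 ht.2.2, sub_le_iff_le_add.1 ht.2.1⟩
      _ = .ofReal (ℓ + r) := by rw [Real.volume_Icc]; ring_nf
  calc ∫⁻ z in coneLayer n r ℓ a b, ‖w z‖ₑ
      ≤ ∫⁻ z in coneLayer n r ℓ a b, ∫⁻ s, q (s, z.2) :=
        setLIntegral_mono' (measurableSet_coneLayer _ _ _ _ _) fun z hz =>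
          enorm_le_lintegral_indicator_coneLayer h ha' haa' hr hz
    _ ≤ .ofReal (ℓ + r) * ∫⁻ x, ∫⁻ s, q (s, x) := by
        rw [Measure.volume_eq_prod]
        exact setLIntegral_snd_le_mul (measurableSet_coneLayer _ _ _ _ _)
          hq.lintegral_prod_left' hfiber
    _ = _ := by
        rw [← lintegral_prod_symm _ hq.aemeasurable, ← Measure.volume_eq_prod,
          lintegral_indicator (measurableSet_coneLayer _ _ _ _ _)]

end ConeLayer

section Directions

open Metric Set

variable {m : ℕ} {r ℓ a b T M t : ℝ} {w : STn (m + 1) → ℝ} {B : ℝ → ℝ} {e x : Spc (m + 1)}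
  {y : Spc m} {z : STn (m + 1)}

/-- The parametrization of the upper unit hemisphere by its orthogonal projection, the unit ball.
It is used to average over directions `e` with Lebesgue measure instead of surface measure. -/
noncomputable def hemi (y : Spc m) : Spc (m + 1) := WithLp.toLp 2 (Fin.cons √(1 - ‖y‖ ^ 2) y)

/-- The orthogonal projection which forgets the coordinate `0`; it is a left inverse of `hemi`. -/
def tail (x : Spc (m + 1)) : Spc m := WithLp.toLp 2 fun i => x i.succ

lemma continuous_hemi : Continuous (hemi : Spc m → Spc (m + 1)) := by
  refine (PiLp.continuous_toLp 2 _).comp (continuous_pi fun i => ?_)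
  refine Fin.cases ?_ (fun j => ?_) i <;> simp only [Fin.cons_zero, Fin.cons_succ] <;> fun_prop

lemma norm_hemi (hy : ‖y‖ ≤ 1) : ‖hemi y‖ = 1 := by
  have hy2 : 0 ≤ 1 - ‖y‖ ^ 2 := sub_nonneg.2 (pow_le_one₀ (norm_nonneg y) hy)
  rw [← sq_eq_sq₀ (norm_nonneg _) zero_le_one, EuclideanSpace.real_norm_sq_eq]
  simp [hemi, Fin.sum_univ_succ, Real.sq_sqrt hy2, ← EuclideanSpace.real_norm_sq_eq]

lemma norm_tail_le (x : Spc (m + 1)) : ‖tail x‖ ≤ ‖x‖ := by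
  rw [← sq_le_sq₀ (norm_nonneg _) (norm_nonneg _), EuclideanSpace.real_norm_sq_eq,
    EuclideanSpace.real_norm_sq_eq, Fin.sum_univ_succ]
  exact le_add_of_nonneg_left (sq_nonneg _)

lemma norm_smul_add_sq_le (hr : 0 ≤ r) (hrt : r ≤ t) (he : ‖e‖ = 1) (hx : ‖x‖ ≤ t + r)
    (hphase : t + inner ℝ e x ≤ ℓ) : ‖t • e + x‖ ^ 2 ≤ (2 * ℓ + 3 * r) * t := by
  have ht : 0 ≤ t := hr.trans hrt
  calc ‖t • e + x‖ ^ 2 = t ^ 2 + 2 * t * inner ℝ e x + ‖x‖ ^ 2 := by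
        rw [norm_add_sq_real, norm_smul, he, real_inner_smul_left, mul_one, Real.norm_eq_abs,
          sq_abs, mul_assoc]
    _ ≤ t ^ 2 + 2 * t * (ℓ - t) + (t + r) ^ 2 := by
        gcongr
        linarith
    _ = (2 * ℓ + 2 * r) * t + r * r := by ring
    _ ≤ (2 * ℓ + 2 * r) * t + r * t := by gcongr
    _ = (2 * ℓ + 3 * r) * t := by ring

lemma mem_closedBall_of_mem_waveStrip_hemi {S : Set ℝ} (hS : S ⊆ Iic ℓ) (hr : 0 ≤ r) (ha : 0 < a)
    (hra : r ≤ a) (hy : ‖y‖ ≤ 1) (hz : z ∈ waveStrip r a b S (hemi y)) :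
    y ∈ closedBall (-(z.1⁻¹ • tail z.2)) √((2 * ℓ + 3 * r) / a) := by
  obtain ⟨t, x⟩ := z
  obtain ⟨⟨hat, -⟩, hx, hphase⟩ := hz
  dsimp only at hat hx hphase ⊢
  have ht : 0 < t := ha.trans_le hat
  have hsq := norm_smul_add_sq_le hr (hra.trans hat) (norm_hemi hy) hx (hS hphase)
  have hℓr : 0 ≤ 2 * ℓ + 3 * r := nonneg_of_mul_nonneg_left ((sq_nonneg _).trans hsq) ht
  have htail : y - -(t⁻¹ • tail x) = t⁻¹ • tail (t • hemi y + x) := by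
    ext i
    simp [tail, hemi, mul_add, ht.ne']
  rw [mem_closedBall, dist_eq_norm, htail, norm_smul, norm_inv, norm_of_nonneg ht.le]
  refine Real.le_sqrt_of_sq_le ?_
  calc (t⁻¹ * ‖tail (t • hemi y + x)‖) ^ 2 ≤ (t⁻¹ * ‖t • hemi y + x‖) ^ 2 := by
        gcongr
        exact norm_tail_le _
    _ ≤ t⁻¹ ^ 2 * ((2 * ℓ + 3 * r) * t) := by
        rw [mul_pow]
        gcongr
    _ = (2 * ℓ + 3 * r) / t := by field_simp
    _ ≤ (2 * ℓ + 3 * r) / a := by gcongr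

/-- The directions `e` whose strip contains a given point `(t, x)` lie within `O(a ^ (-1 / 2))` of
`-x / t`, hence averaging over `e` gains the factor `a ^ (-m / 2)`. -/
lemma ofReal_mul_le_lintegral_coneLayer (h : IsConeSupersolution r T w)
    (hB : IsCutoffProfile r M B) (hBℓ : tsupport B ⊆ Iic ℓ) (hr : 0 ≤ r) (ha : 0 < a)
    (hra : r ≤ a) (hb : b < T) :
    .ofReal (b - a) * .ofReal (∫ x, dtD w (0, x)) ≤
      .ofReal (√((2 * ℓ + 3 * r) / a) ^ m) *
        ∫⁻ z in coneLayer (m + 1) r ℓ a b, jetEnorm M w z := by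
  set D := closedBall (0 : Spc m) 1
  set S := {p : Spc m × STn (m + 1) | p.2 ∈ waveStrip r a b (tsupport B) (hemi p.1)}
  have hS : MeasurableSet S :=
    ((isClosed_setOf_mem_waveStrip (isClosed_tsupport B) r a b).preimage
      (continuous_hemi.prodMap continuous_id)).measurableSet
  have hstrip : ∀ y ∈ D, .ofReal (b - a) * .ofReal (∫ x, dtD w (0, x)) ≤
      ∫⁻ z in Prod.mk y ⁻¹' S, jetEnorm M w z
        ∂(volume.restrict (coneLayer (m + 1) r ℓ a b)) := by
    intro y hy
    have he := norm_hemi (mem_closedBall_zero_iff.1 hy)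
    have hslice : Prod.mk y ⁻¹' S = waveStrip r a b (tsupport B) (hemi y) := rfl
    rw [Measure.restrict_restrict (measurable_prodMk_left hS), hslice,
      inter_eq_left.2 (waveStrip_subset_coneLayer hBℓ he)]
    exact ofReal_mul_le_lintegral_waveStrip h hB he ha.le hb
  have hfiber : ∀ z, volume.restrict D ((·, z) ⁻¹' S) ≤
      .ofReal (√((2 * ℓ + 3 * r) / a) ^ m) * volume D := by
    intro z
    rw [Measure.restrict_apply (measurable_prodMk_right hS)]
    calc volume ((·, z) ⁻¹' S ∩ D)
        ≤ volume (closedBall (-(z.1⁻¹ • tail z.2)) √((2 * ℓ + 3 * r) / a)) :=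
          measure_mono fun y hy => mem_closedBall_of_mem_waveStrip_hemi hBℓ hr ha hra
            (mem_closedBall_zero_iff.1 hy.2) hy.1
      _ = _ := by
          rw [Measure.addHaar_closedBall' _ _ (Real.sqrt_nonneg _), finrank_euclideanSpace_fin]
  have hmean := mul_le_mul_lintegral_of_forall_le_setLIntegral hS (h.measurable_jetEnorm M)
    (ae_restrict_of_forall_mem measurableSet_closedBall hstrip) hfiber
  rw [Measure.restrict_apply_univ, mul_comm (ENNReal.ofReal _) (volume D), mul_assoc] at hmean
  exact (ENNReal.mul_le_mul_iff_right (measure_closedBall_pos _ _ one_pos).ne'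
    measure_closedBall_lt_top.ne).1 hmean

lemma lintegral_enorm_dtD_coneLayer {n : ℕ} {w : STn n → ℝ} (h : IsConeSupersolution r T w) :
    ∫⁻ z in coneLayer n r ℓ a b, ‖dtD w z‖ₑ =
      .ofReal (∫ z in coneLayer n r ℓ a b, |dtD w z|) :=
  (ofReal_integral_norm_eq_lintegral_enorm
    (h.continuous_dtD.continuousOn.integrableOn_compact (isCompact_coneLayer _ _ _ _ _))).symm

end Directions

section IntegralBound

open Metric Set

variable {n m : ℕ} {r ℓ a a' b T M R : ℝ} {B : ℝ → ℝ}

lemma isCutoffProfile_one (r : ℝ) : IsCutoffProfile r 0 fun _ => 1 where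
  contDiff := contDiff_const
  nonneg _ := zero_le_one
  le_one _ := le_rfl
  abs_deriv_le _ := by simp
  eventuallyEq_one _ _ := .rfl

lemma exists_isCutoffProfile (hr : 0 < r) :
    ∃ M B, IsCutoffProfile r M B ∧ tsupport B ⊆ Iic (3 * r) := by
  let B : ContDiffBump (0 : ℝ) := ⟨2 * r, 3 * r, by positivity, by linarith⟩
  obtain ⟨M, hM⟩ := B.hasCompactSupport.deriv.exists_bound_of_continuous
    (B.contDiff (n := 1)).continuous_deriv_one
  refine ⟨M, B, ⟨B.contDiff, fun _ => B.nonneg, fun _ => B.le_one, hM, fun s hs => ?_⟩, ?_⟩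
  · refine B.eventuallyEq_one_of_mem_ball (mem_ball_zero_iff.2 ?_)
    exact hs.trans_lt (show r < 2 * r by linarith)
  · rw [B.tsupport_eq, Real.closedBall_eq_Icc, zero_add]
    exact Icc_subset_Iic_self

lemma mul_integral_le_integral_coneLayer_of_le {w : STn n → ℝ} (hn : n ≠ 0)
    (h : IsConeSupersolution r T w) (ha : 0 ≤ a) (hab : a ≤ b) (hb : b < T) (hbℓ : b ≤ ℓ) :
    (b - a) * ∫ x, dtD w (0, x) ≤ ∫ z in coneLayer n r ℓ a b, |dtD w z| := by
  have hjet : jetEnorm 0 w = fun z => ‖dtD w z‖ₑ := by ext z; simp [jetEnorm]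
  have he : ‖(EuclideanSpace.single ⟨0, Nat.pos_of_ne_zero hn⟩ 1 : Spc n)‖ = 1 := by simp
  rw [← ENNReal.ofReal_le_ofReal_iff (by positivity), ENNReal.ofReal_mul (sub_nonneg.2 hab),
    ← lintegral_enorm_dtD_coneLayer h, ← hjet]
  exact (ofReal_mul_le_lintegral_waveStrip h (isCutoffProfile_one r) he ha hb).trans
    (lintegral_mono_set (waveStrip_subset_coneLayer_of_le hbℓ _ _))

lemma lintegral_jetEnorm_coneLayer_le {w : STn n → ℝ} (h : IsConeSupersolution r T w)
    (hM : 0 ≤ M) (ha' : 0 ≤ a') (haa' : a' + ℓ + r < a) (hℓr : 0 ≤ ℓ + r) :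
    ∫⁻ z in coneLayer n r ℓ a b, jetEnorm M w z ≤
      .ofReal ((1 + M * (ℓ + r)) * ∫ z in coneLayer n r ℓ a' b, |dtD w z|) := by
  have hsub : coneLayer n r ℓ a b ⊆ coneLayer n r ℓ a' b :=
    fun z hz => ⟨⟨by linarith [hz.1.1], hz.1.2⟩, hz.2⟩
  have hmeas : Measurable fun z => ‖dtD w z‖ₑ := h.continuous_dtD.enorm.measurable
  rw [ENNReal.ofReal_mul (by positivity), ENNReal.ofReal_add zero_le_one (by positivity),
    ENNReal.ofReal_mul hM, ENNReal.ofReal_one, ← lintegral_enorm_dtD_coneLayer h]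
  calc ∫⁻ z in coneLayer n r ℓ a b, jetEnorm M w z
      = (∫⁻ z in coneLayer n r ℓ a b, ‖dtD w z‖ₑ) +
          .ofReal M * ∫⁻ z in coneLayer n r ℓ a b, ‖w z‖ₑ := by
        rw [← lintegral_const_mul _ h.contDiff.continuous.enorm.measurable,
          ← lintegral_add_left hmeas]
        rfl
    _ ≤ (∫⁻ z in coneLayer n r ℓ a' b, ‖dtD w z‖ₑ) +
          .ofReal M * (.ofReal (ℓ + r) * ∫⁻ z in coneLayer n r ℓ a' b, ‖dtD w z‖ₑ) := by
        gcongr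
        exact lintegral_enorm_coneLayer_le h ha' haa' hℓr
    _ = _ := by ring

lemma mul_integral_le_integral_coneLayer {w : STn (m + 1) → ℝ} (h : IsConeSupersolution r T w)
    (hB : IsCutoffProfile r M B) (hBℓ : tsupport B ⊆ Iic ℓ) (hr : 0 ≤ r) (hℓr : 0 ≤ ℓ + r)
    (ha' : 0 ≤ a') (haa' : a' + ℓ + r < a) (hra : r ≤ a) (hab : a ≤ b) (hb : b < T) :
    (b - a) * ∫ x, dtD w (0, x) ≤ √((2 * ℓ + 3 * r) / a) ^ m *
      ((1 + M * (ℓ + r)) * ∫ z in coneLayer (m + 1) r ℓ a' b, |dtD w z|) := by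
  have hM : 0 ≤ M := (abs_nonneg _).trans (hB.abs_deriv_le 0)
  rw [← ENNReal.ofReal_le_ofReal_iff (by positivity), ENNReal.ofReal_mul (sub_nonneg.2 hab),
    ENNReal.ofReal_mul (by positivity)]
  refine (ofReal_mul_le_lintegral_coneLayer h hB hBℓ hr (by linarith) hra hb).trans ?_
  gcongr
  exact lintegral_jetEnorm_coneLayer_le h hM ha' haa' hℓr

lemma exists_mul_integral_le_of_large (m : ℕ) (hr : 0 < r) :
    ∃ C > 0, ∀ {T : ℝ} {w : STn (m + 1) → ℝ}, IsConeSupersolution r T w → ∀ {R}, 30 * r ≤ R →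
      R < T → R * √R ^ m * ∫ x, dtD w (0, x) ≤
        C * ∫ z in coneLayer (m + 1) r (3 * r) (R / 2) (3 * R / 4), |dtD w z| := by
  obtain ⟨M, B, hB, hBr⟩ := exists_isCutoffProfile hr
  have hM : 0 ≤ M := (abs_nonneg _).trans (hB.abs_deriv_le 0)
  refine ⟨12 * √(27 * r / 2) ^ m * (1 + M * (4 * r)), by positivity, fun {T w} h {R} hR hRT => ?_⟩
  set I := ∫ z in coneLayer (m + 1) r (3 * r) (R / 2) (3 * R / 4), |dtD w z|
  have hR0 : 0 < R := by linarith
  have hI := mul_integral_le_integral_coneLayer (a := 2 * R / 3) (b := 3 * R / 4) (a' := R / 2) h hB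
    hBr hr.le (by linarith) (by linarith) (by linarith) (by linarith) (by linarith) (by linarith)
  have hsqrt : √R * √((2 * (3 * r) + 3 * r) / (2 * R / 3)) = √(27 * r / 2) := by
    rw [← Real.sqrt_mul hR0.le]
    congr 1
    field_simp
    ring
  calc R * √R ^ m * ∫ x, dtD w (0, x)
      = 12 * √R ^ m * ((3 * R / 4 - 2 * R / 3) * ∫ x, dtD w (0, x)) := by ring
    _ ≤ 12 * √R ^ m * (√((2 * (3 * r) + 3 * r) / (2 * R / 3)) ^ m *
          ((1 + M * (3 * r + r)) * I)) := by gcongr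
    _ = 12 * (√R * √((2 * (3 * r) + 3 * r) / (2 * R / 3))) ^ m * (1 + M * (4 * r)) * I := by ring
    _ = _ := by rw [hsqrt]

lemma integral_abs_coneLayer_mono {w : STn n → ℝ} (h : IsConeSupersolution r T w) {ℓ' : ℝ}
    (hℓ : ℓ ≤ ℓ') :
    ∫ z in coneLayer n r ℓ a b, |dtD w z| ≤ ∫ z in coneLayer n r ℓ' a b, |dtD w z| :=
  setIntegral_mono_set
    (h.continuous_dtD.abs.continuousOn.integrableOn_compact (isCompact_coneLayer _ _ _ _ _))
    (.of_forall fun _ => abs_nonneg _) (coneLayer_subset_coneLayer hℓ).eventuallyLE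

lemma exists_mul_integral_le (m : ℕ) (hr : 0 < r) :
    ∃ C > 0, ∀ {T : ℝ} {w : STn (m + 1) → ℝ}, IsConeSupersolution r T w → ∀ {R}, 0 < R → R < T →
      R * √R ^ m * ∫ x, dtD w (0, x) ≤
        C * ∫ z in coneLayer (m + 1) r (30 * r) (R / 2) (3 * R / 4), |dtD w z| := by
  obtain ⟨C, hC, hlarge⟩ := exists_mul_integral_le_of_large m hr
  refine ⟨max C (4 * √(30 * r) ^ m), lt_max_of_lt_left hC, fun {T w} h {R} hR hRT => ?_⟩
  set I := ∫ z in coneLayer (m + 1) r (30 * r) (R / 2) (3 * R / 4), |dtD w z|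
  rcases le_total (30 * r) R with hrR | hRr
  · calc R * √R ^ m * ∫ x, dtD w (0, x)
        ≤ C * ∫ z in coneLayer (m + 1) r (3 * r) (R / 2) (3 * R / 4), |dtD w z| :=
          hlarge h hrR hRT
      _ ≤ max C (4 * √(30 * r) ^ m) * I := by
          gcongr
          · exact le_max_left _ _
          · exact integral_abs_coneLayer_mono h (by linarith)
  · have hsmall : (3 * R / 4 - R / 2) * ∫ x, dtD w (0, x) ≤ I :=
      mul_integral_le_integral_coneLayer_of_le m.succ_ne_zero h (by positivity) (by linarith)
        (by linarith) (by linarith)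
    calc R * √R ^ m * ∫ x, dtD w (0, x)
        = 4 * √R ^ m * ((3 * R / 4 - R / 2) * ∫ x, dtD w (0, x)) := by ring
      _ ≤ 4 * √R ^ m * I := by gcongr
      _ ≤ 4 * √(30 * r) ^ m * I := by gcongr
      _ ≤ max C (4 * √(30 * r) ^ m) * I := by
          gcongr
          exact le_max_right _ _

end IntegralBound

section PowerBound

open Set

variable {m : ℕ} {r ℓ q : ℝ}

lemma exists_volume_coneLayer_le (m : ℕ) (hr : 0 ≤ r) (hℓ : 0 ≤ ℓ) :
    ∃ C > 0, ∀ {R : ℝ}, 1 ≤ R →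
      volume.real (coneLayer (m + 1) r ℓ (R / 2) (3 * R / 4)) ≤ C * R ^ (m + 1) := by
  set V := volume.real (Metric.ball (0 : Spc (m + 1)) 1)
  refine ⟨(ℓ + r) * (m + 1) * (1 + r) ^ m * V + 1, by positivity, fun {R} hR => ?_⟩
  have hbase : 3 * R / 4 + r ≤ (1 + r) * R := by nlinarith
  calc volume.real (coneLayer (m + 1) r ℓ (R / 2) (3 * R / 4))
      ≤ (ℓ + r) * (m + 1) * (3 * R / 4 + r) ^ m * V * (3 * R / 4 - R / 2) := by
        have hvol := ENNReal.toReal_mono (by finiteness) (volume_coneLayer_le (m := m) (r := r)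
          (ℓ := ℓ) (a := R / 2) (b := 3 * R / 4) (by positivity) (by positivity))
        rwa [ENNReal.toReal_mul, ENNReal.toReal_mul, ENNReal.toReal_ofReal (by positivity),
          ENNReal.toReal_ofReal (by linarith)] at hvol
    _ ≤ (ℓ + r) * (m + 1) * ((1 + r) * R) ^ m * V * R := by
        gcongr <;> linarith
    _ = (ℓ + r) * (m + 1) * (1 + r) ^ m * V * R ^ (m + 1) := by rw [mul_pow, pow_succ]; ring
    _ ≤ _ := by
        gcongr
        exact le_add_of_nonneg_right zero_le_one

lemma mul_sqrt_pow_rpow_div {R : ℝ} (hR : 0 < R) (m : ℕ) (q : ℝ) :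
    (R * √R ^ m) ^ q / (R ^ (m + 1)) ^ (q - 1) = R ^ ((m + 1 : ℝ) - m * q / 2) := by
  have hbase : R * √R ^ m = R ^ (1 + m / 2 : ℝ) := by
    rw [Real.rpow_add hR, Real.rpow_one, Real.sqrt_eq_rpow, ← Real.rpow_mul_natCast hR.le]
    ring_nf
  rw [hbase, ← Real.rpow_natCast R (m + 1), ← Real.rpow_mul hR.le, ← Real.rpow_mul hR.le,
    ← Real.rpow_sub hR]
  push_cast
  ring_nf

lemma integral_abs_coneLayer_rpow_le {n : ℕ} {a b : ℝ} {u : STn n → ℝ} (hu : Continuous u)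
    (hq : 1 ≤ q) :
    (∫ z in coneLayer n r ℓ a b, |u z|) ^ q ≤
      volume.real (coneLayer n r ℓ a b) ^ (q - 1) * ∫ z in coneLayer n r ℓ a b, |u z| ^ q := by
  have hK : IsCompact (coneLayer n r ℓ a b) := isCompact_coneLayer _ _ _ _ _
  have huq : Continuous fun z => |u z| ^ q := hu.abs.rpow_const fun _ => .inr (by linarith)
  have : IsFiniteMeasure (volume.restrict (coneLayer n r ℓ a b)) :=
    isFiniteMeasure_restrict.2 hK.measure_lt_top.ne
  have hjensen := integral_rpow_le_mul_integral_rpow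
    (μ := volume.restrict (coneLayer n r ℓ a b)) hq (fun z => abs_nonneg (u z))
    (hu.abs.continuousOn.integrableOn_compact hK) (huq.continuousOn.integrableOn_compact hK)
  rwa [measureReal_restrict_apply_univ] at hjensen

lemma exists_rpow_mul_le_integral_coneLayer (m : ℕ) (hr : 0 < r) (hq : 1 ≤ q) :
    ∃ c > 0, ∀ {T : ℝ} {w : STn (m + 1) → ℝ}, IsConeSupersolution r T w →
      0 ≤ ∫ x, dtD w (0, x) → ∀ {R}, 1 ≤ R → R < T →
        c * (∫ x, dtD w (0, x)) ^ q * R ^ ((m + 1 : ℝ) - m * q / 2) ≤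
          ∫ z in coneLayer (m + 1) r (30 * r) (R / 2) (3 * R / 4), |dtD w z| ^ q := by
  obtain ⟨C₁, hC₁, hL1⟩ := exists_mul_integral_le m hr
  obtain ⟨C₂, hC₂, hvol⟩ := exists_volume_coneLayer_le m hr.le (by positivity : 0 ≤ 30 * r)
  refine ⟨(C₁ ^ q * C₂ ^ (q - 1))⁻¹, by positivity, fun {T w} h hX {R} hR hRT => ?_⟩
  set K := coneLayer (m + 1) r (30 * r) (R / 2) (3 * R / 4)
  set X := ∫ x, dtD w (0, x)
  have hR0 : 0 < R := zero_lt_one.trans_le hR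
  have hpow : (R * √R ^ m) ^ q * X ^ q ≤
      C₁ ^ q * C₂ ^ (q - 1) * (R ^ (m + 1)) ^ (q - 1) * ∫ z in K, |dtD w z| ^ q :=
    calc (R * √R ^ m) ^ q * X ^ q = (R * √R ^ m * X) ^ q := by
          rw [Real.mul_rpow (by positivity) hX]
      _ ≤ (C₁ * ∫ z in K, |dtD w z|) ^ q :=
          Real.rpow_le_rpow (by positivity) (hL1 h hR0 hRT) (by linarith)
      _ = C₁ ^ q * (∫ z in K, |dtD w z|) ^ q := Real.mul_rpow hC₁.le (by positivity)
      _ ≤ C₁ ^ q * ((C₂ * R ^ (m + 1)) ^ (q - 1) * ∫ z in K, |dtD w z| ^ q) := by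
          gcongr
          refine (integral_abs_coneLayer_rpow_le h.continuous_dtD hq).trans ?_
          gcongr
          exact hvol hR
      _ = _ := by rw [Real.mul_rpow hC₂.le (by positivity)]; ring
  rw [← mul_sqrt_pow_rpow_div hR0, mul_div_assoc', div_le_iff₀ (by positivity), mul_assoc,
    inv_mul_le_iff₀ (by positivity)]
  calc X ^ q * (R * √R ^ m) ^ q = (R * √R ^ m) ^ q * X ^ q := mul_comm _ _
    _ ≤ _ := hpow
    _ = _ := by ring

end PowerBound

section Cutoff

open Set

variable {η : ℝ → ℝ} {s : ℝ}

/-- The cutoff `η*`, which agrees with `η` on `[1/2, ∞)` and vanishes before. -/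
noncomputable def etaStar (η : ℝ → ℝ) (s : ℝ) : ℝ := if s < 1 / 2 then 0 else η s

lemma antitone_of_antitoneOn_Ici (hmono : AntitoneOn η (Ici 0)) (hη1 : ∀ s ≤ 1 / 2, η s = 1) :
    Antitone η := by
  refine AntitoneOn.Iic_union_Ici (a := 0) (fun s hs t ht _ => ?_) hmono
  rw [hη1 s (by linarith [mem_Iic.1 hs]), hη1 t (by linarith [mem_Iic.1 ht])]

lemma mem_Icc_of_antitone (hη : Antitone η) (hη1 : ∀ s ≤ 1 / 2, η s = 1)
    (hη0 : ∀ s, 1 ≤ s → η s = 0) (s : ℝ) : η s ∈ Icc 0 1 :=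
  ⟨(hη0 _ (le_max_right s 1)).ge.trans (hη (le_max_left s 1)),
    (hη (min_le_left s (1 / 2))).trans (hη1 _ (min_le_right s (1 / 2))).le⟩

lemma etaStar_mem_Icc (hη : ∀ s, η s ∈ Icc 0 1) (s : ℝ) : etaStar η s ∈ Icc 0 1 := by
  rw [etaStar]
  split_ifs
  · exact ⟨le_rfl, zero_le_one⟩
  · exact hη s

lemma measurable_etaStar (hη : Measurable η) : Measurable (etaStar η) :=
  .ite measurableSet_Iio measurable_const hη

lemma le_etaStar (hη : Antitone η) {b : ℝ} (hs : s ∈ Icc (1 / 2) b) : η b ≤ etaStar η s := by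
  rw [etaStar, if_neg hs.1.not_gt]
  exact hη hs.2

lemma pos_of_strictAntiOn_Ioo (hη : ∀ s, η s ∈ Icc 0 1) {a b : ℝ}
    (hstrict : StrictAntiOn η (Ioo a b)) (hs : s ∈ Ioo a b) : 0 < η s := by
  obtain ⟨t, hst, htb⟩ := exists_between hs.2
  exact (hη t).1.trans_lt (hstrict hs ⟨hs.1.trans hst, htb⟩ hst)

end Cutoff

theorem lower_bound_lemma_general {n : ℕ} (hn : n ≠ 0) {q : ℝ} (hq : 1 ≤ q) {r₀ : ℝ} (hr₀ : 0 < r₀)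
    {φ : ℝ → ℝ} (hφ : Measurable φ) {c M : ℝ} (hφM : ∀ s, φ s ∈ Set.Icc 0 M) (hc : 0 < c)
    (hcφ : ∀ s ∈ Set.Icc (1 / 2) (3 / 4), c ≤ φ s) :
    ∃ δ > 0, ∀ {T : ℝ} {w : STn n → ℝ}, IsConeSupersolution r₀ T w →
      0 ≤ ∫ x, dtD w (0, x) → ∀ {R : ℝ}, 1 ≤ R → R < T →
        δ * (∫ x, dtD w (0, x)) ^ q * R ^ ((n : ℝ) - ((n : ℝ) - 1) * q / 2) ≤
          ∫ z in Set.Ioo 0 T ×ˢ (Set.univ : Set (Spc n)), |dtD w z| ^ q * φ (z.1 / R) := by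
  obtain ⟨m, rfl⟩ := Nat.exists_eq_succ_of_ne_zero hn
  obtain ⟨δ, hδ, hbound⟩ := exists_rpow_mul_le_integral_coneLayer m hr₀ hq
  refine ⟨c * δ, by positivity, fun {T w} h hX {R} hR hRT => ?_⟩
  have hR0 : 0 < R := zero_lt_one.trans_le hR
  have hsupp : SupportedInCone r₀ fun z => |dtD w z| ^ q := fun z hz hzr => by
    simp [h.supported_dtD z hz hzr, Real.zero_rpow (by linarith : q ≠ 0)]
  have hcont : Continuous fun z => |dtD w z| ^ q :=
    h.continuous_dtD.abs.rpow_const fun _ => .inr (by linarith)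
  calc c * δ * (∫ x, dtD w (0, x)) ^ q * R ^ (((m + 1 : ℕ) : ℝ) - (((m + 1 : ℕ) : ℝ) - 1) * q / 2)
      = c * (δ * (∫ x, dtD w (0, x)) ^ q * R ^ ((m + 1 : ℝ) - m * q / 2)) := by
        push_cast
        rw [add_sub_cancel_right]
        ring
    _ ≤ c * ∫ z in coneLayer (m + 1) r₀ (30 * r₀) (R / 2) (3 * R / 4), |dtD w z| ^ q := by
        gcongr
        exact hbound h hX hR hRT
    _ ≤ _ := by
        refine mul_setIntegral_le_setIntegral_mul (measurableSet_coneLayer _ _ _ _ _)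
          (fun z hz => ⟨⟨by linarith [hz.1.1], by linarith [hz.1.2]⟩, Set.mem_univ _⟩)
          (fun z => by positivity) (hsupp.integrableOn_slab hcont T)
          (hφ.comp (measurable_fst.div_const R)) (fun z => hφM _) fun z hz => hcφ _ ?_
        exact ⟨(le_div_iff₀ hR0).2 (by linarith [hz.1.1]),
          (div_le_iff₀ hR0).2 (by linarith [hz.1.2])⟩

/-- The lower bound lemma of Ikeda–Sobajima–Wakasa (Lemma 2.3). -/
theorem lower_bound_lemma (n : ℕ) (hn : 2 ≤ n) (qbar : ℝ) (hqbar : 1 < qbar)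
    (k : ℕ) (hk : 2 * (qbar / (qbar - 1)) ≤ (k : ℝ))
    (r₀ : ℝ) (hr₀ : 0 < r₀)
    (η : ℝ → ℝ) (hηsm : ContDiff ℝ ∞ η) (hmono : AntitoneOn η (Set.Ici 0))
    (hη1 : ∀ s : ℝ, s ≤ 1/2 → η s = 1) (hη0 : ∀ s : ℝ, 1 ≤ s → η s = 0)
    (hstrict : StrictAntiOn η (Set.Ioo (1/2 : ℝ) 1)) :
    ∃ δ > (0 : ℝ), ∀ T ε : ℝ, 1 < T → 0 < ε →
      ∀ f g : Spc n → ℝ, ContDiff ℝ ∞ f → HasCompactSupport f →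
        ContDiff ℝ ∞ g → HasCompactSupport g → 0 < (∫ x, g x) →
      ∀ w : STn n → ℝ, ContDiff ℝ 2 w →
        (∀ x, w (0, x) = ε * f x) → (∀ x, dtD w (0, x) = ε * g x) →
        (∀ z : STn n, 0 ≤ z.1 → z.1 + r₀ < ‖z.2‖ → w z = 0) →
        (∀ z : STn n, 0 < z.1 → z.1 < T → 0 ≤ boxD w z) →
        ∀ R : ℝ, 1 ≤ R → R < T →
          δ * (ε * ∫ x, g x) ^ qbar * R ^ ((n : ℝ) - ((n : ℝ) - 1) * qbar / 2) ≤
            ∫ z in Set.Ioo 0 T ×ˢ (Set.univ : Set (Spc n)),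
              |dtD w z| ^ qbar * (if z.1 / R < 1/2 then 0 else η (z.1 / R)) ^ k := by
  have hη : Antitone η := antitone_of_antitoneOn_Ici hmono hη1
  have hη01 : ∀ s, η s ∈ Set.Icc 0 1 := mem_Icc_of_antitone hη hη1 hη0
  have hpos : 0 < η (3 / 4) := pos_of_strictAntiOn_Ioo hη01 hstrict (by norm_num)
  obtain ⟨δ, hδ, hbound⟩ := lower_bound_lemma_general (n := n) (by lia) hqbar.le hr₀
    (φ := fun s => etaStar η s ^ k) ((measurable_etaStar hη.measurable).pow_const k)
    (fun s => ⟨pow_nonneg (etaStar_mem_Icc hη01 s).1 k,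
      pow_le_one₀ (etaStar_mem_Icc hη01 s).1 (etaStar_mem_Icc hη01 s).2⟩)
    (pow_pos hpos k) (fun s hs => pow_le_pow_left₀ hpos.le (le_etaStar hη hs) k)
  refine ⟨δ, hδ, fun T ε _ hε f g _ _ _ _ hg w hw _ hdt hsupp hbox R hR hRT => ?_⟩
  have hmass : ∫ x, dtD w (0, x) = ε * ∫ x, g x := by simp only [hdt, integral_const_mul]
  have hnonneg : 0 ≤ ∫ x, dtD w (0, x) := hmass ▸ by positivity
  exact hmass ▸ hbound ⟨hw, hsupp, hbox⟩ hnonneg hR hRT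
end

section
/- Let n ≥ 2, 2 ≤ p < ∞, and let s be a positive integer with s > n/p. Then there exists a constant C > 0 such that for every t ≥ 0 and every C^∞ function v on [0,∞) × ℝⁿ which is Schwartz in the x-variable, ‖χ_{1,t} v(t,·)‖_{L^∞(ℝⁿ)} ≤ C (1+t)^{−n/p} Σ_{|α| ≤ s} ‖(Γ^α v)(t,·)‖_{L^p(ℝⁿ)}. -/
/-!
The idea is to trade spatial derivatives for Klainerman fields and to average over directions.
A Hardy-type inequality along the segment `r ↦ x + r z`, `0 ≤ r ≤ 1`, applied `k + 1` times, bounds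
`|v(t, x)|` by the integrals of `r ^ k |∂_z ^ i v(t, x + r z)|` with `i ≤ k + 1`. When
`|x| < (1 + t) / 2` and `|z| ≤ (1 + t) / 10` the segment stays so far inside the light cone that
`(t² - |x|²) ∂_j = t L_j - x_j S - ∑ₖ xₖ Ω_{kj}` controls each `∂_z` by the fields `Γ` with a
constant independent of `t`; for bounded `t` the fields `∂_j` do it themselves. Averaging over `z`
in the ball of radius `(1 + t) / 10` and applying Hölder's inequality at fixed `r` costs
`(1 + t) ^ (-n / p) r ^ (-n / p)`, and `r ^ (k - n / p)` is integrable on `(0, 1]` precisely when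
`k + 1 > n / p`.
-/

open MeasureTheory Real ENNReal FourierTransform
open scoped ContDiff

section OneDim

open Set

theorem lintegral_Ioc_mul_lintegral_Icc {a c : ℝ} {w u : ℝ → ℝ≥0∞} (hw : Measurable w)
    (hu : Measurable u) :
    ∫⁻ r in Ioc a c, w r * ∫⁻ b in Icc r c, u b =
      ∫⁻ b in Ioc a c, (∫⁻ r in Ioc a b, w r) * u b := by
  let T : Set (ℝ × ℝ) := {q | q.1 ≤ q.2}
  have hT : MeasurableSet T := measurableSet_le measurable_fst measurable_snd
  calc ∫⁻ r in Ioc a c, w r * ∫⁻ b in Icc r c, u b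
      = ∫⁻ r in Ioc a c, ∫⁻ b in Ioc a c, T.indicator (fun q => w q.1 * u q.2) (r, b) := by
        refine setLIntegral_congr_fun measurableSet_Ioc fun r hr => ?_
        have hIcc : Ici r ∩ Ioc a c = Icc r c := by
          ext b
          exact ⟨fun h => ⟨h.1, h.2.2⟩, fun h => ⟨h.1, hr.1.trans_le h.1, h.2⟩⟩
        change w r * _ = ∫⁻ b in Ioc a c, (Ici r).indicator (fun b => w r * u b) b
        rw [setLIntegral_indicator measurableSet_Ici, hIcc, lintegral_const_mul _ hu]
    _ = ∫⁻ b in Ioc a c, ∫⁻ r in Ioc a c, T.indicator (fun q => w q.1 * u q.2) (r, b) :=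
        lintegral_lintegral_swap
          (((hw.comp measurable_fst).mul (hu.comp measurable_snd)).indicator hT).aemeasurable
    _ = ∫⁻ b in Ioc a c, (∫⁻ r in Ioc a b, w r) * u b := by
        refine setLIntegral_congr_fun measurableSet_Ioc fun b hb => ?_
        have hIoc : Iic b ∩ Ioc a c = Ioc a b := by
          ext r
          exact ⟨fun h => ⟨h.2.1, h.1⟩, fun h => ⟨h.2, h.1, h.2.trans hb.2⟩⟩
        change ∫⁻ r in Ioc a c, (Iic b).indicator (fun r => w r * u b) r = _
        rw [setLIntegral_indicator measurableSet_Iic, hIoc, lintegral_mul_const _ hw]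

variable {F : Type*} [NormedAddCommGroup F] [NormedSpace ℝ F] {h : ℝ → F}

theorem enorm_le_enorm_add_lintegral_deriv (hh : ContDiff ℝ 1 h) {a b : ℝ} (hab : a ≤ b) :
    ‖h a‖ₑ ≤ ‖h b‖ₑ + ∫⁻ σ in Icc a b, ‖deriv h σ‖ₑ :=
  calc ‖h a‖ₑ ≤ ‖h b‖ₑ + ‖h b - h a‖ₑ := by
        simpa using enorm_sub_le (a := h b) (b := h b - h a)
    _ ≤ _ := by
        gcongr
        exact enorm_sub_le_lintegral_deriv_of_contDiffOn_Icc hh.contDiffOn hab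

theorem enorm_le_mul_enorm_add_lintegral_Icc (hh : ContDiff ℝ 1 h) {r : ℝ} (hr : r ∈ Icc 0 1) :
    ‖h r‖ₑ ≤ ENNReal.ofReal r * ‖h r‖ₑ + ∫⁻ b in Icc r 1, (‖h b‖ₑ + ‖deriv h b‖ₑ) := by
  have hsplit : ENNReal.ofReal r + ENNReal.ofReal (1 - r) = 1 := by
    rw [← ENNReal.ofReal_add hr.1 (sub_nonneg.2 hr.2)]
    simp
  have hle : ENNReal.ofReal (1 - r) ≤ 1 := hsplit ▸ le_add_self
  -- Averaging over the endpoint `b ∈ [r, 1]`, rather than integrating by parts, avoids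
  -- differentiating `‖h‖`.
  have haverage : ENNReal.ofReal (1 - r) * ‖h r‖ₑ ≤ ∫⁻ b in Icc r 1, (‖h b‖ₑ + ‖deriv h b‖ₑ) :=
    calc ENNReal.ofReal (1 - r) * ‖h r‖ₑ = ∫⁻ _ in Icc r 1, ‖h r‖ₑ := by
          rw [setLIntegral_const, Real.volume_Icc, mul_comm]
      _ ≤ ∫⁻ b in Icc r 1, (‖h b‖ₑ + ∫⁻ σ in Icc r 1, ‖deriv h σ‖ₑ) :=
          setLIntegral_mono' measurableSet_Icc fun b hb =>
            (enorm_le_enorm_add_lintegral_deriv hh hb.1).trans <| by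
              gcongr
              exact hb.2
      _ = (∫⁻ b in Icc r 1, ‖h b‖ₑ) +
            (∫⁻ b in Icc r 1, ‖deriv h b‖ₑ) * ENNReal.ofReal (1 - r) := by
          rw [lintegral_add_right _ measurable_const, setLIntegral_const, Real.volume_Icc]
      _ ≤ (∫⁻ b in Icc r 1, ‖h b‖ₑ) + ∫⁻ b in Icc r 1, ‖deriv h b‖ₑ := by
          gcongr
          exact mul_le_of_le_one_right' hle
      _ = _ := (lintegral_add_left hh.continuous.enorm.measurable _).symm
  calc ‖h r‖ₑ = ENNReal.ofReal r * ‖h r‖ₑ + ENNReal.ofReal (1 - r) * ‖h r‖ₑ := by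
        rw [← add_mul, hsplit, one_mul]
    _ ≤ _ := by gcongr

theorem lintegral_pow_mul_enorm_le (hh : ContDiff ℝ 1 h) (k : ℕ) :
    ∫⁻ r in Ioc (0 : ℝ) 1, ENNReal.ofReal r ^ k * ‖h r‖ₑ ≤
      2 * (∫⁻ r in Ioc (0 : ℝ) 1, ENNReal.ofReal r ^ (k + 1) * ‖h r‖ₑ) +
        ∫⁻ r in Ioc (0 : ℝ) 1, ENNReal.ofReal r ^ (k + 1) * ‖deriv h r‖ₑ := by
  have hm : Measurable fun b => ‖h b‖ₑ := hh.continuous.enorm.measurable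
  have hm' : Measurable fun b => ‖deriv h b‖ₑ := hh.continuous_deriv_one.enorm.measurable
  have hk : ∀ b : ℝ, ∫⁻ r in Ioc 0 b, ENNReal.ofReal r ^ k ≤ ENNReal.ofReal b ^ (k + 1) := fun b =>
    calc ∫⁻ r in Ioc 0 b, ENNReal.ofReal r ^ k ≤ ∫⁻ _ in Ioc 0 b, ENNReal.ofReal b ^ k :=
          setLIntegral_mono' measurableSet_Ioc fun r hr => by gcongr; exact hr.2
      _ = ENNReal.ofReal b ^ (k + 1) := by simp [pow_succ]
  calc ∫⁻ r in Ioc (0 : ℝ) 1, ENNReal.ofReal r ^ k * ‖h r‖ₑ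
      ≤ ∫⁻ r in Ioc (0 : ℝ) 1, (ENNReal.ofReal r ^ (k + 1) * ‖h r‖ₑ +
          ENNReal.ofReal r ^ k * ∫⁻ b in Icc r 1, (‖h b‖ₑ + ‖deriv h b‖ₑ)) := by
        refine setLIntegral_mono' measurableSet_Ioc fun r hr => ?_
        rw [pow_succ, mul_assoc, ← mul_add]
        gcongr
        exact enorm_le_mul_enorm_add_lintegral_Icc hh ⟨hr.1.le, hr.2⟩
    _ = (∫⁻ r in Ioc (0 : ℝ) 1, ENNReal.ofReal r ^ (k + 1) * ‖h r‖ₑ) +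
          ∫⁻ b in Ioc (0 : ℝ) 1, (∫⁻ r in Ioc 0 b, ENNReal.ofReal r ^ k) *
            (‖h b‖ₑ + ‖deriv h b‖ₑ) := by
        rw [lintegral_add_left (by fun_prop),
          lintegral_Ioc_mul_lintegral_Icc (u := fun b => ‖h b‖ₑ + ‖deriv h b‖ₑ)
            (by fun_prop) (by fun_prop)]
    _ ≤ (∫⁻ r in Ioc (0 : ℝ) 1, ENNReal.ofReal r ^ (k + 1) * ‖h r‖ₑ) +
          ∫⁻ b in Ioc (0 : ℝ) 1, (ENNReal.ofReal b ^ (k + 1) * ‖h b‖ₑ +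
            ENNReal.ofReal b ^ (k + 1) * ‖deriv h b‖ₑ) := by
        gcongr with b
        rw [← mul_add]
        gcongr
        exact hk b
    _ = _ := by
        rw [lintegral_add_left (by fun_prop)]
        ring

end OneDim

section SegmentIntegral

open Set

variable {E F : Type*} [NormedAddCommGroup E] [NormedSpace ℝ E] [NormedAddCommGroup F]

/-- The integral of `‖g‖` along the segment from `x` to `x + z`, weighted by the `k`-th power of the
parameter `r ∈ (0, 1]`; it is `[0, ∞]`-valued, so no integrability is needed. -/
noncomputable def segInt (k : ℕ) (g : E → F) (x z : E) : ℝ≥0∞ :=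
  ∫⁻ r in Ioc (0 : ℝ) 1, ENNReal.ofReal r ^ k * ‖g (x + r • z)‖ₑ

theorem measurable_pow_mul_enorm_segment [MeasurableSpace E] [BorelSpace E]
    [SecondCountableTopology E] {g : E → F} (hg : StronglyMeasurable g) (k : ℕ) (x : E) :
    Measurable fun q : E × ℝ => ENNReal.ofReal q.2 ^ k * ‖g (x + q.2 • q.1)‖ₑ := by
  have : StronglyMeasurable fun q : E × ℝ => g (x + q.2 • q.1) :=
    hg.comp_measurable (by fun_prop)
  exact Measurable.mul (by fun_prop) this.enorm

theorem measurable_segInt [MeasurableSpace E] [BorelSpace E] [SecondCountableTopology E]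
    {g : E → F} (hg : StronglyMeasurable g) (k : ℕ) (x : E) : Measurable (segInt k g x) :=
  (measurable_pow_mul_enorm_segment hg k x).lintegral_prod_right'

variable [NormedSpace ℝ F] {g : E → F}

theorem deriv_comp_segment (hg : Differentiable ℝ g) (x z : E) (r : ℝ) :
    deriv (fun r : ℝ => g (x + r • z)) r = fderiv ℝ g (x + r • z) z := by
  have hseg : HasDerivAt (fun r : ℝ => x + r • z) z r := by
    simpa using ((hasDerivAt_id r).smul_const z).const_add x
  exact ((hg _).hasFDerivAt.comp_hasDerivAt r hseg).deriv

theorem enorm_le_segInt_zero (hg : ContDiff ℝ 1 g) (x z : E) :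
    ‖g x‖ₑ ≤ segInt 0 g x z + segInt 0 (fun y => fderiv ℝ g y z) x z := by
  have hh : ContDiff ℝ 1 fun r : ℝ => g (x + r • z) := by fun_prop
  have hm : Measurable fun r : ℝ => ‖g (x + r • z)‖ₑ := hh.continuous.enorm.measurable
  simpa [lintegral_add_left hm, segInt, deriv_comp_segment (hg.differentiable one_ne_zero),
    restrict_Ioc_eq_restrict_Icc] using
    enorm_le_mul_enorm_add_lintegral_Icc hh (left_mem_Icc.2 zero_le_one)

theorem segInt_le_succ (hg : ContDiff ℝ 1 g) (k : ℕ) (x z : E) :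
    segInt k g x z ≤ 2 * segInt (k + 1) g x z + segInt (k + 1) (fun y => fderiv ℝ g y z) x z := by
  have hh : ContDiff ℝ 1 fun r : ℝ => g (x + r • z) := by fun_prop
  simpa only [segInt, deriv_comp_segment (hg.differentiable one_ne_zero)] using
    lintegral_pow_mul_enorm_le hh k

end SegmentIntegral

section BallAverage

open Set Metric Module

theorem laverage_enorm_le_eLpNorm {Ω F : Type*} [MeasurableSpace Ω] [NormedAddCommGroup F]
    {μ : Measure Ω} [IsFiniteMeasure μ] [NeZero μ] {f : Ω → F} (hf : AEStronglyMeasurable f μ)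
    {p : ℝ≥0∞} (hp : 1 ≤ p) :
    ⨍⁻ x, ‖f x‖ₑ ∂μ ≤ μ univ ^ (-(1 / p.toReal)) * eLpNorm f p μ := by
  have hμ : (μ univ)⁻¹ ≠ 0 := ENNReal.inv_ne_zero.2 (measure_ne_top μ univ)
  calc ⨍⁻ x, ‖f x‖ₑ ∂μ = eLpNorm f 1 ((μ univ)⁻¹ • μ) := eLpNorm_one_eq_lintegral_enorm.symm
    _ ≤ eLpNorm f p ((μ univ)⁻¹ • μ) :=
        eLpNorm_le_eLpNorm_of_exponent_le hp (hf.mono_ac Measure.smul_absolutelyContinuous)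
    _ = μ univ ^ (-(1 / p.toReal)) * eLpNorm f p μ := by
        rw [eLpNorm_smul_measure_of_ne_zero hμ, smul_eq_mul, ENNReal.inv_rpow, ENNReal.rpow_neg]
        simp

theorem lintegral_Ioc_rpow_lt_top {a : ℝ} (ha : -1 < a) :
    ∫⁻ r in Ioc (0 : ℝ) 1, ENNReal.ofReal (r ^ a) < ⊤ :=
  (intervalIntegral.intervalIntegrable_rpow' ha).1.lintegral_lt_top

variable {E F : Type*} [NormedAddCommGroup E] [NormedSpace ℝ E] [FiniteDimensional ℝ E]
  [MeasurableSpace E] [BorelSpace E] (μ : Measure E) [μ.IsAddHaarMeasure] [NormedAddCommGroup F]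

theorem addHaar_ball_mul_rpow {a : ℝ} (ha : 0 < a) (ρ q : ℝ) :
    μ (ball 0 (a * ρ)) ^ (-(1 / q)) =
      ENNReal.ofReal (a ^ (-(finrank ℝ E : ℝ) / q)) * μ (ball 0 ρ) ^ (-(1 / q)) := by
  rw [Measure.addHaar_ball_mul_of_pos μ 0 ha,
    ENNReal.mul_rpow_of_ne_top (by finiteness) measure_ball_lt_top.ne,
    ENNReal.ofReal_rpow_of_pos (by positivity), ← Real.rpow_natCast, ← Real.rpow_mul ha.le]
  congr 3
  ring

theorem eLpNorm_comp_add_smul (g : E → F) (p : ℝ≥0∞) (x : E) {r : ℝ} (hr : 0 < r) :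
    eLpNorm (fun z => g (x + r • z)) p μ =
      ENNReal.ofReal (r ^ (-(finrank ℝ E : ℝ) / p.toReal)) * eLpNorm g p μ := by
  have hmap : μ.map (fun z => x + r • z) = ENNReal.ofReal (r ^ (-(finrank ℝ E : ℝ))) • μ := by
    change μ.map ((x + ·) ∘ (r • ·)) = _
    rw [← Measure.map_map (by fun_prop) (by fun_prop), Measure.map_addHaar_smul μ hr.ne',
      Measure.map_smul, map_add_left_eq_self, abs_of_pos (by positivity), Real.rpow_neg hr.le,
      Real.rpow_natCast]
  have hemb : MeasurableEmbedding fun z => x + r • z :=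
    (measurableEmbedding_addLeft x).comp (measurableEmbedding_const_smul₀ hr.ne')
  calc eLpNorm (fun z => g (x + r • z)) p μ = eLpNorm g p (μ.map fun z => x + r • z) :=
        hemb.eLpNorm_map_measure.symm
    _ = ENNReal.ofReal (r ^ (-(finrank ℝ E : ℝ) / p.toReal)) * eLpNorm g p μ := by
        rw [hmap, eLpNorm_smul_measure_of_ne_zero (by positivity), smul_eq_mul,
          ENNReal.ofReal_rpow_of_pos (by positivity), ← Real.rpow_mul hr.le]
        simp [div_eq_mul_inv]

variable {g : E → F} {p : ℝ≥0∞}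

theorem laverage_ball_enorm_comp_add_smul_le (hg : StronglyMeasurable g) (hp : 1 ≤ p) (x : E)
    {ρ r : ℝ} (hρ : 0 < ρ) (hr : 0 < r) :
    ⨍⁻ z in ball 0 ρ, ‖g (x + r • z)‖ₑ ∂μ ≤ μ (ball 0 ρ) ^ (-(1 / p.toReal)) *
      (ENNReal.ofReal (r ^ (-(finrank ℝ E : ℝ) / p.toReal)) * eLpNorm g p μ) := by
  have : IsFiniteMeasure (μ.restrict (ball 0 ρ)) :=
    isFiniteMeasure_restrict.2 measure_ball_lt_top.ne
  have : NeZero (μ.restrict (ball 0 ρ)) :=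
    ⟨Measure.restrict_eq_zero.not.2 (measure_ball_pos μ 0 hρ).ne'⟩
  have hm : StronglyMeasurable fun z => g (x + r • z) := hg.comp_measurable (by fun_prop)
  calc ⨍⁻ z in ball 0 ρ, ‖g (x + r • z)‖ₑ ∂μ
      ≤ μ (ball 0 ρ) ^ (-(1 / p.toReal)) *
          eLpNorm (fun z => g (x + r • z)) p (μ.restrict (ball 0 ρ)) := by
        rw [← Measure.restrict_apply_univ (μ := μ) (ball 0 ρ)]
        exact laverage_enorm_le_eLpNorm hm.aestronglyMeasurable hp
    _ ≤ μ (ball 0 ρ) ^ (-(1 / p.toReal)) * eLpNorm (fun z => g (x + r • z)) p μ := by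
        gcongr
        exact Measure.restrict_le_self
    _ = _ := by rw [eLpNorm_comp_add_smul μ g p x hr]

theorem laverage_ball_segInt_le (hg : StronglyMeasurable g) (hp : 1 ≤ p) (k : ℕ) (x : E)
    {ρ : ℝ} (hρ : 0 < ρ) :
    ⨍⁻ z in ball 0 ρ, segInt k g x z ∂μ ≤ μ (ball 0 ρ) ^ (-(1 / p.toReal)) *
      (∫⁻ r in Ioc (0 : ℝ) 1, ENNReal.ofReal (r ^ (k - finrank ℝ E / p.toReal : ℝ))) *
        eLpNorm g p μ :=
  calc ⨍⁻ z in ball 0 ρ, segInt k g x z ∂μ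
      = ∫⁻ r in Ioc (0 : ℝ) 1,
          ENNReal.ofReal r ^ k * ⨍⁻ z in ball 0 ρ, ‖g (x + r • z)‖ₑ ∂μ := by
        simp only [laverage, segInt]
        rw [lintegral_lintegral_swap (measurable_pow_mul_enorm_segment hg k x).aemeasurable]
        exact lintegral_congr fun r => lintegral_const_mul' _ _ (by finiteness)
    _ ≤ ∫⁻ r in Ioc (0 : ℝ) 1, ENNReal.ofReal (r ^ (k - finrank ℝ E / p.toReal : ℝ)) *
          (μ (ball 0 ρ) ^ (-(1 / p.toReal)) * eLpNorm g p μ) := by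
        refine setLIntegral_mono' measurableSet_Ioc fun r hr => ?_
        have hpow : ENNReal.ofReal (r ^ (k - finrank ℝ E / p.toReal : ℝ)) =
            ENNReal.ofReal r ^ k * ENNReal.ofReal (r ^ (-(finrank ℝ E : ℝ) / p.toReal)) := by
          rw [sub_eq_add_neg, Real.rpow_add hr.1, ENNReal.ofReal_mul (rpow_nonneg hr.1.le _),
            Real.rpow_natCast, ENNReal.ofReal_pow hr.1.le, neg_div]
        rw [hpow, mul_assoc, mul_left_comm (ENNReal.ofReal _)]
        gcongr
        exact laverage_ball_enorm_comp_add_smul_le μ hg hp x hρ hr.1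
    _ = _ := by
        rw [lintegral_mul_const _ (by fun_prop)]
        ring

end BallAverage

section VectorFields

variable {n N : ℕ} {m : WithTop ℕ∞} {f : STn n → ℝ}

theorem contDiff_dirD_s6 (e : STn n) (hf : ContDiff ℝ (m + 1) f) : ContDiff ℝ m (dirD e f) :=
  (hf.fderiv_right le_rfl).clm_apply contDiff_const

theorem contDiff_gop (i : GIdx n) (hf : ContDiff ℝ (m + 1) f) : ContDiff ℝ m (Gop i f) := by
  have hcoord (j : Fin n) : ContDiff ℝ m fun q : STn n => q.2 j := by fun_prop
  have ht : ContDiff ℝ m (dtD f) := contDiff_dirD_s6 _ hf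
  have hx (j : Fin n) : ContDiff ℝ m (dxD j f) := contDiff_dirD_s6 _ hf
  rcases i with (_ | j) | j | ⟨j, k⟩ | _
  · exact ht
  · exact hx j
  · exact (contDiff_fst.mul (hx j)).add ((hcoord j).mul ht)
  · exact ((hcoord j).mul (hx k)).sub ((hcoord k).mul (hx j))
  · exact (contDiff_fst.mul ht).add (ContDiff.sum fun j _ => (hcoord j).mul (hx j))

theorem contDiff_gwL {l : List (GIdx n)} (hl : l.length ≤ N) (hf : ContDiff ℝ (m + N) f) :
    ContDiff ℝ m (GwL l f) := by
  induction l generalizing m N with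
  | nil => exact hf.of_le le_self_add
  | cons i l ih =>
    obtain ⟨N, rfl⟩ := Nat.exists_eq_add_of_le' (Nat.one_le_of_lt hl)
    refine contDiff_gop i (ih (Nat.le_of_succ_le_succ hl) ?_)
    rwa [Nat.cast_succ, add_comm (N : WithTop ℕ∞), ← add_assoc] at hf

theorem sum_gop {M : Type*} [AddCommMonoid M] (φ : (STn n → ℝ) → M) (f : STn n → ℝ) :
    ∑ i, φ (Gop i f) = (φ (dtD f) + ∑ j, φ (dxD j f)) + (∑ j, φ (LD j f) +
      (∑ jk : Fin n × Fin n, φ (RotD jk.1 jk.2 f) + φ (SD f))) :=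
  calc ∑ i, φ (Gop i f)
      = ∑ i : Option (Fin n) ⊕ Fin n ⊕ (Fin n × Fin n) ⊕ Unit, φ (Gop (n := n) i f) :=
        Fintype.sum_equiv (Equiv.refl _) _ _ fun _ => rfl
    _ = _ := by simp [Fintype.sum_sum_type, Fintype.sum_option, Gop]

theorem fderiv_slice_apply {t : ℝ} {q : Spc n} (hf : DifferentiableAt ℝ f (t, q)) (z : Spc n) :
    fderiv ℝ (fun y => f (t, y)) q z = ∑ j, z j * dxD j f (t, q) := by
  have hz : ∑ j, z j • EuclideanSpace.single j (1 : ℝ) = z := by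
    simpa using (EuclideanSpace.basisFun (Fin n) ℝ).sum_repr z
  have hslice : fderiv ℝ (fun y => f (t, y)) q =
      (fderiv ℝ f (t, q)).comp (ContinuousLinearMap.inr ℝ ℝ (Spc n)) :=
    (hf.hasFDerivAt.comp q (hasFDerivAt_prodMk_right t q)).fderiv
  conv_lhs => rw [hslice, ← hz, map_sum]
  simp [dxD, dirD]

end VectorFields

section WordSums

variable {n N : ℕ} {m : WithTop ℕ∞} {f : STn n → ℝ} {Φ Ψ : (STn n → ℝ) → ℝ≥0∞}

theorem contDiff_gwL_ofFn (hf : ContDiff ℝ (m + N) f) {l : ℕ} (hl : l ∈ Finset.range (N + 1))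
    (w : Fin l → GIdx n) : ContDiff ℝ m (GwL (List.ofFn w) f) :=
  contDiff_gwL (by simpa [Nat.lt_succ_iff] using hl) hf

theorem sumW_mono (hf : ContDiff ℝ (m + N) f) (h : ∀ g, ContDiff ℝ m g → Φ g ≤ Ψ g) :
    SumW N Φ f ≤ SumW N Ψ f :=
  Finset.sum_le_sum fun _ hl => Finset.sum_le_sum fun w _ => h _ (contDiff_gwL_ofFn hf hl w)

theorem lintegral_sumW {Ω : Type*} [MeasurableSpace Ω] {μ : Measure Ω}
    {Φ : (STn n → ℝ) → Ω → ℝ≥0∞} (hf : ContDiff ℝ (m + N) f)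
    (hΦ : ∀ g, ContDiff ℝ m g → Measurable (Φ g)) :
    ∫⁻ z, SumW N (fun g => Φ g z) f ∂μ = SumW N (fun g => ∫⁻ z, Φ g z ∂μ) f := by
  have hword {l : ℕ} (hl : l ∈ Finset.range (N + 1)) (w : Fin l → GIdx n) :
      Measurable (Φ (GwL (List.ofFn w) f)) := hΦ _ (contDiff_gwL_ofFn hf hl w)
  simp only [SumW]
  rw [lintegral_finsetSum _ fun l hl => Finset.measurable_fun_sum _ fun w _ => hword hl w]
  exact Finset.sum_congr rfl fun l hl => lintegral_finsetSum _ fun w _ => hword hl w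

theorem mul_sumW (c : ℝ≥0∞) (N : ℕ) (Φ : (STn n → ℝ) → ℝ≥0∞) (f : STn n → ℝ) :
    c * SumW N Φ f = SumW N (fun g => c * Φ g) f := by
  simp only [SumW, Finset.mul_sum]

theorem sumW_add (N : ℕ) (Φ Ψ : (STn n → ℝ) → ℝ≥0∞) (f : STn n → ℝ) :
    SumW N (fun g => Φ g + Ψ g) f = SumW N Φ f + SumW N Ψ f := by
  simp only [SumW, Finset.sum_add_distrib]

theorem sumW_le_sumW_succ (N : ℕ) (Φ : (STn n → ℝ) → ℝ≥0∞) (f : STn n → ℝ) :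
    SumW N Φ f ≤ SumW (N + 1) Φ f :=
  Finset.sum_le_sum_of_subset (Finset.range_mono (Nat.le_succ _))

theorem sumW_sum_gop_le (N : ℕ) (Φ : (STn n → ℝ) → ℝ≥0∞) (f : STn n → ℝ) :
    SumW N (fun g => ∑ i, Φ (Gop i g)) f ≤ SumW (N + 1) Φ f :=
  calc SumW N (fun g => ∑ i, Φ (Gop i g)) f
      = ∑ l ∈ Finset.range (N + 1), ∑ w : Fin (l + 1) → GIdx n, Φ (GwL (List.ofFn w) f) := by
        refine Finset.sum_congr rfl fun l _ => ?_
        rw [← (Fin.consEquiv fun _ => GIdx n).sum_comp, Fintype.sum_prod_type_right]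
        simp [List.ofFn_succ, GwL]
    _ ≤ SumW (N + 1) Φ f := by
        rw [SumW, Finset.sum_range_succ' _ (N + 1)]
        exact le_self_add

theorem sumW_le_mul_sumW_succ {K : ℝ≥0∞} (hf : ContDiff ℝ (m + N) f)
    (h : ∀ g, ContDiff ℝ m g → Φ g ≤ 2 * Ψ g + K * ∑ i, Ψ (Gop i g)) :
    SumW N Φ f ≤ (2 + K) * SumW (N + 1) Ψ f :=
  calc SumW N Φ f ≤ SumW N (fun g => 2 * Ψ g + K * ∑ i, Ψ (Gop i g)) f := sumW_mono hf h
    _ = 2 * SumW N Ψ f + K * SumW N (fun g => ∑ i, Ψ (Gop i g)) f := by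
        rw [sumW_add, mul_sumW, mul_sumW]
    _ ≤ (2 + K) * SumW (N + 1) Ψ f := by
        rw [add_mul]
        gcongr
        · exact sumW_le_sumW_succ N Ψ f
        · exact sumW_sum_gop_le N Ψ f

end WordSums

section LightCone

variable {n : ℕ} {t : ℝ} {x : Spc n}

theorem sq_sub_norm_sq_mul_dxD (f : STn n → ℝ) (j : Fin n) (t : ℝ) (x : Spc n) :
    (t ^ 2 - ‖x‖ ^ 2) * dxD j f (t, x) =
      t * LD j f (t, x) - x j * SD f (t, x) - ∑ k, x k * RotD k j f (t, x) := by
  have hnorm : ‖x‖ ^ 2 = ∑ k, x k * x k := by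
    rw [EuclideanSpace.norm_sq_eq]
    simp [sq]
  have hrot : ∑ k, x k * RotD k j f (t, x) =
      (∑ k, x k * x k) * dxD j f (t, x) - x j * ∑ k, x k * dxD k f (t, x) := by
    rw [Finset.sum_mul, Finset.mul_sum, ← Finset.sum_sub_distrib]
    refine Finset.sum_congr rfl fun k _ => ?_
    simp only [RotD]
    ring
  rw [hrot, hnorm]
  simp only [LD, SD]
  ring

theorem abs_dxD_le_sum_abs_gop (f : STn n → ℝ) (j : Fin n) (q : STn n) :
    |dxD j f q| ≤ ∑ i, |Gop i f q| :=
  Finset.single_le_sum (f := fun i : GIdx n => |Gop i f q|) (fun _ _ => abs_nonneg _)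
    (Finset.mem_univ (Sum.inl (some j)))

theorem sq_sub_norm_sq_mul_abs_dxD_le (f : STn n → ℝ) (j : Fin n) (hx : ‖x‖ ≤ t) :
    (t ^ 2 - ‖x‖ ^ 2) * |dxD j f (t, x)| ≤ t * ∑ i, |Gop i f (t, x)| := by
  have ht : 0 ≤ t := (norm_nonneg x).trans hx
  have hcoord (k : Fin n) : |x k| ≤ t := (PiLp.norm_apply_le x k).trans hx
  have hfields : |LD j f (t, x)| + |SD f (t, x)| + ∑ k, |RotD k j f (t, x)| ≤
      ∑ i, |Gop i f (t, x)| := by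
    have hL : |LD j f (t, x)| ≤ ∑ j, |LD j f (t, x)| :=
      Finset.single_le_sum (f := fun j => |LD j f (t, x)|) (fun _ _ => abs_nonneg _)
        (Finset.mem_univ j)
    have hR : ∑ k, |RotD k j f (t, x)| ≤ ∑ jk : Fin n × Fin n, |RotD jk.1 jk.2 f (t, x)| := by
      rw [Fintype.sum_prod_type]
      exact Finset.sum_le_sum fun k _ => Finset.single_le_sum
        (f := fun j => |RotD k j f (t, x)|) (fun _ _ => abs_nonneg _) (Finset.mem_univ j)
    have hD : 0 ≤ |dtD f (t, x)| + ∑ j, |dxD j f (t, x)| := by positivity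
    rw [sum_gop (fun g => |g (t, x)|)]
    linarith
  calc (t ^ 2 - ‖x‖ ^ 2) * |dxD j f (t, x)| = |(t ^ 2 - ‖x‖ ^ 2) * dxD j f (t, x)| := by
        rw [abs_mul, abs_of_nonneg (sub_nonneg.2 (by gcongr))]
    _ ≤ |t * LD j f (t, x)| + |x j * SD f (t, x)| + |∑ k, x k * RotD k j f (t, x)| := by
        rw [sq_sub_norm_sq_mul_dxD]
        exact (abs_sub _ _).trans (by gcongr; exact abs_sub _ _)
    _ ≤ t * |LD j f (t, x)| + t * |SD f (t, x)| + ∑ k, t * |RotD k j f (t, x)| := by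
        rw [abs_mul, abs_mul, abs_of_nonneg ht]
        gcongr
        · exact hcoord j
        · refine (Finset.abs_sum_le_sum_abs _ _).trans (Finset.sum_le_sum fun k _ => ?_)
          rw [abs_mul]
          gcongr
          exact hcoord k
    _ ≤ t * ∑ i, |Gop i f (t, x)| := by
        rw [← Finset.mul_sum, ← mul_add, ← mul_add]
        gcongr

theorem one_add_mul_abs_dxD_le (f : STn n → ℝ) (j : Fin n) (ht : 0 ≤ t)
    (hx : ‖x‖ ≤ 3 / 5 * (1 + t)) :
    (1 + t) / 10 * |dxD j f (t, x)| ≤ ∑ i, |Gop i f (t, x)| := by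
  -- Only for large `t` does `‖x‖ ≤ 3 / 5 * (1 + t)` keep `x` away from the boundary of the cone;
  -- for small `t` the weight is bounded and `∂_j` is itself one of the fields.
  rcases lt_or_ge t 5 with hsmall | hlarge
  · calc (1 + t) / 10 * |dxD j f (t, x)| ≤ 1 * |dxD j f (t, x)| := by gcongr; linarith
      _ ≤ ∑ i, |Gop i f (t, x)| := by rw [one_mul]; exact abs_dxD_le_sum_abs_gop f j (t, x)
  · have hcone : t * ((1 + t) / 10) ≤ t ^ 2 - ‖x‖ ^ 2 := by
      have : ‖x‖ ≤ 18 / 25 * t := by linarith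
      nlinarith [norm_nonneg x]
    refine le_of_mul_le_mul_left (a := t) ?_ (by linarith)
    calc t * ((1 + t) / 10 * |dxD j f (t, x)|) ≤ (t ^ 2 - ‖x‖ ^ 2) * |dxD j f (t, x)| := by
          rw [← mul_assoc]
          gcongr
      _ ≤ t * ∑ i, |Gop i f (t, x)| := sq_sub_norm_sq_mul_abs_dxD_le f j (by linarith)

theorem enorm_fderiv_slice_le {f : STn n → ℝ} (hf : DifferentiableAt ℝ f (t, x)) (ht : 0 ≤ t)
    (hx : ‖x‖ ≤ 3 / 5 * (1 + t)) {z : Spc n} (hz : ‖z‖ ≤ (1 + t) / 10) :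
    ‖fderiv ℝ (fun y => f (t, y)) x z‖ₑ ≤ n * ∑ i, ‖Gop i f (t, x)‖ₑ := by
  have hreal : |fderiv ℝ (fun y => f (t, y)) x z| ≤ n * ∑ i, |Gop i f (t, x)| :=
    calc |fderiv ℝ (fun y => f (t, y)) x z| ≤ ∑ j, |z j * dxD j f (t, x)| := by
          rw [fderiv_slice_apply hf]
          exact Finset.abs_sum_le_sum_abs _ _
      _ ≤ ∑ _j : Fin n, ∑ i, |Gop i f (t, x)| := by
          refine Finset.sum_le_sum fun j _ => ?_
          rw [abs_mul]
          refine le_trans ?_ (one_add_mul_abs_dxD_le f j ht hx)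
          gcongr
          exact (PiLp.norm_apply_le z j).trans hz
      _ = n * ∑ i, |Gop i f (t, x)| := by simp
  simpa [Real.enorm_eq_ofReal_abs, ENNReal.ofReal_mul, ENNReal.ofReal_sum_of_nonneg] using
    ENNReal.ofReal_le_ofReal hreal

theorem segInt_fderiv_slice_le {f : STn n → ℝ} (hf : ContDiff ℝ 1 f) (ht : 0 ≤ t)
    (hx : ‖x‖ < (1 + t) / 2) {z : Spc n} (hz : ‖z‖ ≤ (1 + t) / 10) (k : ℕ) :
    segInt k (fun w => fderiv ℝ (fun y => f (t, y)) w z) x z ≤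
      n * ∑ i, segInt k (fun y => Gop i f (t, y)) x z := by
  have hmeas (i : GIdx n) :
      Measurable fun r : ℝ => ENNReal.ofReal r ^ k * ‖Gop i f (t, x + r • z)‖ₑ := by
    have hcont : Continuous (Gop i f) := (contDiff_gop (m := 0) i (by simpa using hf)).continuous
    have hslice : Continuous fun r : ℝ => Gop i f (t, x + r • z) := hcont.comp (by fun_prop)
    exact Measurable.mul (by fun_prop) hslice.measurable.enorm
  have hseg {r : ℝ} (hr : r ∈ Set.Ioc 0 1) : ‖x + r • z‖ ≤ 3 / 5 * (1 + t) :=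
    calc ‖x + r • z‖ ≤ ‖x‖ + 1 * ‖z‖ := by
          refine (norm_add_le _ _).trans ?_
          rw [norm_smul, Real.norm_of_nonneg hr.1.le]
          gcongr
          exact hr.2
      _ ≤ 3 / 5 * (1 + t) := by linarith
  calc segInt k (fun w => fderiv ℝ (fun y => f (t, y)) w z) x z
      ≤ ∫⁻ r in Set.Ioc (0 : ℝ) 1,
          n * ∑ i, ENNReal.ofReal r ^ k * ‖Gop i f (t, x + r • z)‖ₑ := by
        refine setLIntegral_mono' measurableSet_Ioc fun r hr => ?_
        rw [← Finset.mul_sum, mul_left_comm]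
        gcongr
        exact enorm_fderiv_slice_le (hf.differentiable one_ne_zero _) ht (hseg hr) hz
    _ = n * ∑ i, segInt k (fun y => Gop i f (t, y)) x z := by
        rw [lintegral_const_mul _ (Finset.measurable_fun_sum _ fun i _ => hmeas i),
          lintegral_finsetSum _ fun i _ => hmeas i]
        rfl

end LightCone

section Pointwise

open Metric

variable {n : ℕ} {f : STn n → ℝ} {t : ℝ} {x : Spc n}

theorem enorm_le_mul_sumW_segInt (k : ℕ) (hf : ContDiff ℝ (k + 1) f) (ht : 0 ≤ t)
    (hx : ‖x‖ < (1 + t) / 2) {z : Spc n} (hz : ‖z‖ ≤ (1 + t) / 10) :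
    ‖f (t, x)‖ₑ ≤ (2 + n) ^ (k + 1) *
      SumW (k + 1) (fun g => segInt k (fun y => g (t, y)) x z) f := by
  have hslice {g : STn n → ℝ} (hg : ContDiff ℝ 1 g) : ContDiff ℝ 1 fun y => g (t, y) := by
    fun_prop
  induction k with
  | zero =>
    calc ‖f (t, x)‖ₑ = SumW 0 (fun g => ‖g (t, x)‖ₑ) f := by simp [SumW, GwL]
      _ ≤ _ := by
        rw [zero_add, pow_one]
        refine sumW_le_mul_sumW_succ (m := 1) (by simpa using hf) fun g hg => ?_
        refine (enorm_le_segInt_zero (hslice hg) x z).trans ?_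
        gcongr
        · exact le_mul_of_one_le_left' one_le_two
        · exact segInt_fderiv_slice_le hg ht hx hz 0
  | succ k ih =>
    have hstep : SumW (k + 1) (fun g => segInt k (fun y => g (t, y)) x z) f ≤
        (2 + n) * SumW (k + 2) (fun g => segInt (k + 1) (fun y => g (t, y)) x z) f := by
      refine sumW_le_mul_sumW_succ (m := 1) (by simpa [add_comm] using hf) fun g hg => ?_
      refine (segInt_le_succ (hslice hg) k x z).trans ?_
      gcongr
      exact segInt_fderiv_slice_le hg ht hx hz (k + 1)
    calc ‖f (t, x)‖ₑ ≤ _ := ih (hf.of_le (by simp))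
      _ ≤ _ := by
        rw [pow_succ _ (k + 1), mul_assoc]
        gcongr

/-- The constant in the pointwise Klainerman–Sobolev inequality with `k + 1` fields: one factor
`2 + n` for each derivative traded for fields, Hölder's inequality on a ball of radius `1 / 10`,
and the integral over the dilation parameter. -/
noncomputable def ksConst (n k : ℕ) (p : ℝ) : ℝ≥0∞ :=
  (2 + n) ^ (k + 1) * (volume (ball (0 : Spc n) (1 / 10)) ^ (-(1 / p)) *
    ∫⁻ r in Set.Ioc (0 : ℝ) 1, ENNReal.ofReal (r ^ (k - n / p : ℝ)))

theorem ksConst_ne_top {k : ℕ} {p : ℝ} (hk : n / p < k + 1) : ksConst n k p ≠ ⊤ := by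
  have hball : volume (ball (0 : Spc n) (1 / 10)) ^ (-(1 / p)) ≠ ⊤ :=
    ENNReal.rpow_ne_top_of_ne_zero (measure_ball_pos _ _ (by norm_num)).ne'
      measure_ball_lt_top.ne
  have hint := (lintegral_Ioc_rpow_lt_top (a := k - n / p) (by linarith)).ne
  have hpow : ((2 : ℝ≥0∞) + n) ^ (k + 1) ≠ ⊤ := by finiteness
  exact ENNReal.mul_ne_top hpow (ENNReal.mul_ne_top hball hint)

theorem enorm_le_ksConst_mul_sumW_eLpNorm {k : ℕ} {p : ℝ} (hp : 1 ≤ p)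
    (hf : ContDiff ℝ (k + 1) f) (ht : 0 ≤ t) (hx : ‖x‖ < (1 + t) / 2) :
    ‖f (t, x)‖ₑ ≤ ksConst n k p * ENNReal.ofReal ((1 + t) ^ (-(n : ℝ) / p)) *
      SumW (k + 1) (fun g => eLpNorm (fun y => g (t, y)) (ENNReal.ofReal p) volume) f := by
  set B : Set (Spc n) := ball 0 ((1 + t) * (1 / 10))
  have hf' : ContDiff ℝ (0 + (k + 1 : ℕ)) f := by simpa using hf
  have hslice {g : STn n → ℝ} (hg : ContDiff ℝ 0 g) :
      StronglyMeasurable fun y => g (t, y) :=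
    (hg.continuous.comp (by fun_prop)).stronglyMeasurable
  have hB : volume B ≠ 0 := (measure_ball_pos _ _ (by positivity)).ne'
  have hp' : (ENNReal.ofReal p).toReal = p := ENNReal.toReal_ofReal (by linarith)
  calc ‖f (t, x)‖ₑ = ⨍⁻ _ in B, ‖f (t, x)‖ₑ ∂volume :=
        (setLAverage_const hB measure_ball_lt_top.ne _).symm
    _ ≤ ⨍⁻ z in B, (2 + n) ^ (k + 1) *
          SumW (k + 1) (fun g => segInt k (fun y => g (t, y)) x z) f ∂volume := by
        simp only [setLAverage_eq]
        gcongr ?_ / _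
        refine setLIntegral_mono' measurableSet_ball fun z hz => ?_
        refine enorm_le_mul_sumW_segInt k hf ht hx ?_
        linarith [mem_ball_zero_iff.1 hz]
    _ = (2 + n) ^ (k + 1) *
          SumW (k + 1) (fun g => ⨍⁻ z in B, segInt k (fun y => g (t, y)) x z ∂volume) f := by
        rw [laverage, lintegral_const_mul' _ _ (by finiteness),
          lintegral_sumW hf' fun g hg => measurable_segInt (hslice hg) k x]
        rfl
    _ ≤ (2 + n) ^ (k + 1) * SumW (k + 1) (fun g => volume B ^ (-(1 / p)) *
          (∫⁻ r in Set.Ioc (0 : ℝ) 1, ENNReal.ofReal (r ^ (k - n / p : ℝ))) *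
            eLpNorm (fun y => g (t, y)) (ENNReal.ofReal p) volume) f := by
        gcongr
        refine sumW_mono hf' fun g hg => ?_
        simpa only [hp', finrank_euclideanSpace_fin] using
          laverage_ball_segInt_le volume (hslice hg) (p := ENNReal.ofReal p) (by simpa using hp)
            k x (by positivity)
    _ = _ := by
        rw [← mul_sumW, addHaar_ball_mul_rpow volume (by positivity), finrank_euclideanSpace_fin,
          ksConst]
        ring

end Pointwise

theorem klainerman_sobolev_ii_general (n : ℕ) (p : ℝ) (hp : 1 ≤ p) (s : ℕ)
    (hsp : (n : ℝ) / p < s) :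
    ∃ C > (0 : ℝ), ∀ v : STn n → ℝ, ContDiff ℝ s v → ∀ t : ℝ, 0 ≤ t →
      eLpNorm (Set.indicator {x : Spc n | ‖x‖ < (1 + t) / 2} (fun x => v (t, x))) ⊤ volume ≤
        ENNReal.ofReal (C * (1 + t) ^ (-(n : ℝ) / p)) *
          SumW s (fun f => eLpNorm (fun x => f (t, x)) (ENNReal.ofReal p) volume) v := by
  have hs : (0 : ℝ) < s := lt_of_le_of_lt (by positivity) hsp
  obtain ⟨k, rfl⟩ := Nat.exists_eq_add_of_le' (Nat.one_le_of_lt (Nat.cast_pos.1 hs))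
  have hfin : ksConst n k p ≠ ⊤ := ksConst_ne_top (by exact_mod_cast hsp)
  refine ⟨(ksConst n k p).toReal + 1, by positivity, fun v hv t ht => ?_⟩
  have hC : ksConst n k p ≤ ENNReal.ofReal ((ksConst n k p).toReal + 1) :=
    (ENNReal.le_ofReal_iff_toReal_le hfin (by positivity)).2 (by linarith)
  rw [eLpNorm_exponent_top, ENNReal.ofReal_mul (by positivity)]
  refine eLpNormEssSup_le_of_ae_enorm_bound (.of_forall fun x => ?_)
  rw [enorm_indicator_eq_indicator_enorm]
  refine Set.indicator_apply_le' (fun hx => ?_) fun _ => zero_le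
  refine (enorm_le_ksConst_mul_sumW_eLpNorm hp (by exact_mod_cast hv) ht hx).trans ?_
  gcongr

/-- Klainerman–Sobolev type inequality, part (ii) of Lemma 3.2. -/
theorem klainerman_sobolev_ii (n : ℕ) (hn : 2 ≤ n) (p : ℝ) (hp : 2 ≤ p)
    (s : ℕ) (hs : 0 < s) (hsp : (n : ℝ)/p < s) :
    ∃ C > (0 : ℝ), ∀ v : STn n → ℝ, ContDiff ℝ ∞ v → SchwartzInX v → ∀ t : ℝ, 0 ≤ t →
      eLpNorm (Set.indicator {x : Spc n | ‖x‖ < (1 + t)/2} (fun x => v (t, x))) ⊤ volume ≤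
        ENNReal.ofReal (C * (1 + t) ^ (-(n : ℝ)/p)) *
          SumW s (fun f => eLpNorm (fun x => f (t, x)) (ENNReal.ofReal p) volume) v := by
  obtain ⟨C, hC, h⟩ := klainerman_sobolev_ii_general n p (one_le_two.trans hp) s hsp
  exact ⟨C, hC, fun v hv _ => h v (hv.of_le (by exact_mod_cast le_top))⟩
end
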